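/- Let 1<p<∞ and let μ be a finite positive Borel measure on [0,1). Then the operator H_μ is well defined on the Hardy space H^p and bounded from H^p into itself if and only if μ is a Carleson measure. -/

import Mathlib

open MeasureTheory Set Metric ENNReal

noncomputable section

namespace PaperHankel

/-- The moment of order `n` of a measure on `[0,1)`:  `μ_n = ∫_{[0,1)} t^n dμ(t)`. -/
def mom (μ : Measure ℝ) (n : ℕ) : ℝ := ∫ t in Ico (0:ℝ) 1, t ^ n ∂μ

/-- The `n`-th Taylor coefficient of `f` at `0`. -/
def tc (f : ℂ → ℂ) (n : ℕ) : ℂ := iteratedDeriv n f 0 / n.factorial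

/-- The `n`-th Taylor coefficient of `H_μ f`, namely `∑_k μ_{n+k} a_k`. -/
def hmuCoeff (μ : Measure ℝ) (f : ℂ → ℂ) (n : ℕ) : ℂ :=
  ∑' k : ℕ, (mom μ (n + k) : ℂ) * tc f k

/-- `H_μ f` is well defined: each coefficient series converges absolutely, and the resulting
power series has radius of convergence at least `1`. -/
def HmuWD (μ : Measure ℝ) (f : ℂ → ℂ) : Prop :=
  (∀ n : ℕ, Summable fun k : ℕ => ‖(mom μ (n + k) : ℂ) * tc f k‖) ∧
  ∀ z ∈ ball (0:ℂ) 1, Summable fun n : ℕ => ‖hmuCoeff μ f n * z ^ n‖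

/-- The generalized Hilbert operator induced by the Hankel matrix of moments of `μ`. -/
def Hmu (μ : Measure ℝ) (f : ℂ → ℂ) : ℂ → ℂ :=
  fun z => ∑' n : ℕ, hmuCoeff μ f n * z ^ n

/-- `I_μ f` is well defined: the defining integral converges absolutely for every `z ∈ 𝔻`. -/
def ImuWD (μ : Measure ℝ) (f : ℂ → ℂ) : Prop :=
  ∀ z ∈ ball (0:ℂ) 1, IntegrableOn (fun t : ℝ => f t / (1 - t * z)) (Ico (0:ℝ) 1) μ

/-- The integral operator `I_μ f (z) = ∫_{[0,1)} f(t)/(1-tz) dμ(t)`. -/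
def Imu (μ : Measure ℝ) (f : ℂ → ℂ) : ℂ → ℂ :=
  fun z => ∫ t in Ico (0:ℝ) 1, f t / (1 - t * z) ∂μ

/-- The `p`-th circle mean `M_p(r,f)` raised into the Hardy norm shape:
`((1/2π) ∫_0^{2π} |f(r e^{iθ})|^p dθ)^{1/p}`. -/
def circMean (p : ℝ) (f : ℂ → ℂ) (r : ℝ) : ℝ :=
  ((2 * Real.pi)⁻¹ * ∫ θ in (0:ℝ)..(2 * Real.pi),
      ‖f (r * Complex.exp (θ * Complex.I))‖ ^ p) ^ (1 / p)

/-- Membership in the Hardy space `H^p`. -/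
def MemHardy (p : ℝ) (f : ℂ → ℂ) : Prop :=
  DifferentiableOn ℂ f (ball (0:ℂ) 1) ∧ ∃ M : ℝ, ∀ r ∈ Ico (0:ℝ) 1, circMean p f r ≤ M

/-- The `H^p` norm. -/
def hardyNorm (p : ℝ) (f : ℂ → ℂ) : ℝ :=
  sSup {x : ℝ | ∃ r ∈ Ico (0:ℝ) 1, x = circMean p f r}

/-- Membership in `H^∞`: analytic and bounded on the unit disc. -/
def MemHinf (f : ℂ → ℂ) : Prop :=
  DifferentiableOn ℂ f (ball (0:ℂ) 1) ∧ ∃ M : ℝ, ∀ z ∈ ball (0:ℂ) 1, ‖f z‖ ≤ M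

/-- The `H^∞` norm. -/
def hinfNorm (f : ℂ → ℂ) : ℝ := sSup {x : ℝ | ∃ z ∈ ball (0:ℂ) 1, x = ‖f z‖}

/-- The mean `M_2(r,g) = ((1/2π) ∫_0^{2π} |g(r e^{iθ})|² dθ)^{1/2}`. -/
def M2 (g : ℂ → ℂ) (r : ℝ) : ℝ :=
  Real.sqrt ((2 * Real.pi)⁻¹ * ∫ θ in (0:ℝ)..(2 * Real.pi),
      ‖g (r * Complex.exp (θ * Complex.I))‖ ^ 2)

/-- Membership in the mean Lipschitz space `Λ²_{1/2}`:
`M_2(r,f') = O((1-r)^{-1/2})` as `r → 1⁻`. -/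
def MemLambda (f : ℂ → ℂ) : Prop :=
  DifferentiableOn ℂ f (ball (0:ℂ) 1) ∧
  ∃ C : ℝ, ∀ r ∈ Ico (0:ℝ) 1, Real.sqrt (1 - r) * M2 (deriv f) r ≤ C

/-- The norm on `Λ²_{1/2}`. -/
def lambdaNorm (f : ℂ → ℂ) : ℝ :=
  ‖f 0‖ + sSup {x : ℝ | ∃ r ∈ Ico (0:ℝ) 1, x = Real.sqrt (1 - r) * M2 (deriv f) r}

/-- `∫_𝔻 |f'(z)|² g(z,a)^s dA(z)` with `g(z,a) = log |(1- ā z)/(z-a)|` and `dA` the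
normalized area measure, computed as a lower integral in `[0,∞]`. -/
def qsInt (s : ℝ) (f : ℂ → ℂ) (a : ℂ) : ℝ≥0∞ :=
  (ENNReal.ofReal Real.pi)⁻¹ * ∫⁻ z in ball (0:ℂ) 1,
    ENNReal.ofReal (‖deriv f z‖ ^ 2 * (Real.log ‖(1 - (starRingEnd ℂ) a * z) / (z - a)‖) ^ s)

/-- Membership in `Q_s`: analytic on `𝔻` with `ρ_{Q_s}(f)² = sup_{a ∈ 𝔻} ∫ ... < ∞`. -/
def MemQs (s : ℝ) (f : ℂ → ℂ) : Prop :=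
  DifferentiableOn ℂ f (ball (0:ℂ) 1) ∧ (⨆ a ∈ ball (0:ℂ) 1, qsInt s f a) < ⊤

/-- The norm on `Q_s`, `‖f‖ = |f(0)| + ρ_{Q_s}(f)`. -/
def qsNorm (s : ℝ) (f : ℂ → ℂ) : ℝ :=
  ‖f 0‖ + Real.sqrt (⨆ a ∈ ball (0:ℂ) 1, qsInt s f a).toReal

/-- The condition `∫_{[0,1)} tⁿ log(1/(1-t)) dμ(t) = O(1/n)`, stated with the lower
integral so that in particular the integrals are finite. -/
def LogMomentBigO (μ : Measure ℝ) : Prop :=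
  ∃ C > 0, ∀ n : ℕ, 1 ≤ n →
    (∫⁻ t in Ico (0:ℝ) 1, ENNReal.ofReal (t ^ n * Real.log (1 / (1 - t))) ∂μ) ≤
      ENNReal.ofReal (C / n)

/-- Membership in the Bloch space. -/
def MemBloch (f : ℂ → ℂ) : Prop :=
  DifferentiableOn ℂ f (ball (0:ℂ) 1) ∧
  ∃ M : ℝ, ∀ z ∈ ball (0:ℂ) 1, (1 - ‖z‖ ^ 2) * ‖deriv f z‖ ≤ M

/-- The Bloch norm `‖f‖ = |f(0)| + ρ_B(f)`. -/
def blochNorm (f : ℂ → ℂ) : ℝ :=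
  ‖f 0‖ + sSup {x : ℝ | ∃ z ∈ ball (0:ℂ) 1, x = (1 - ‖z‖ ^ 2) * ‖deriv f z‖}

/-- Membership in the Besov space `B^p`. -/
def MemBesov (p : ℝ) (f : ℂ → ℂ) : Prop :=
  DifferentiableOn ℂ f (ball (0:ℂ) 1) ∧
  IntegrableOn (fun z : ℂ => (1 - ‖z‖ ^ 2) ^ (p - 2) * ‖deriv f z‖ ^ p) (ball (0:ℂ) 1) volume

/-- The Besov norm `‖f‖ = |f(0)| + ρ_p(f)`. -/
def besovNorm (p : ℝ) (f : ℂ → ℂ) : ℝ :=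
  ‖f 0‖ + (Real.pi⁻¹ *
    ∫ z in ball (0:ℂ) 1, (1 - ‖z‖ ^ 2) ^ (p - 2) * ‖deriv f z‖ ^ p) ^ (1 / p)

/-- `μ` is an `α`-logarithmic `s`-Carleson measure on `[0,1)`. -/
def IsLogCarleson (μ : Measure ℝ) (α s : ℝ) : Prop :=
  ∃ C > 0, ∀ t ∈ Ico (0:ℝ) 1,
    (μ (Ico t 1)).toReal * Real.log (2 / (1 - t)) ^ α ≤ C * (1 - t) ^ s

/-- `μ` is an `s`-Carleson measure on `[0,1)`. -/
def IsCarleson (μ : Measure ℝ) (s : ℝ) : Prop :=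
  ∃ C > 0, ∀ t ∈ Ico (0:ℝ) 1, (μ (Ico t 1)).toReal ≤ C * (1 - t) ^ s



lemma w_summable (a : ℝ) (ha0 : 0 < a) (ha1 : a < 1) :
    Summable fun j : ℤ => ((2:ℝ)^j)^(-a) * (2:ℝ)^j / ((2:ℝ)^j + 1) := by
  have h2 : ∀ b : ℝ, b < 0 → Summable fun n : ℕ => ((2:ℝ)^b)^n := fun b hb =>
    summable_geometric_of_lt_one (by positivity) (Real.rpow_lt_one_of_one_lt_of_neg (by norm_num) hb)
  apply Summable.of_nat_of_neg
  · refine Summable.of_nonneg_of_le (fun n => by positivity) (fun n => ?_) (h2 (-a) (by linarith))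
    rw [zpow_natCast, div_le_iff₀ (by positivity)]
    have : ((2:ℝ)^n)^(-a) = ((2:ℝ)^(-a))^n := by
      rw [← Real.rpow_natCast, ← Real.rpow_mul (by norm_num), ← Real.rpow_natCast,
        ← Real.rpow_mul (by norm_num), mul_comm]
    rw [this]
    gcongr
    linarith
  · refine Summable.of_nonneg_of_le (fun n => by positivity) (fun n => ?_) (h2 (a-1) (by linarith))
    have e : ((2:ℝ)^(-(n:ℤ)))^(-a) * (2:ℝ)^(-(n:ℤ)) = ((2:ℝ)^(a-1))^n := by
      rw [← Real.rpow_intCast, ← Real.rpow_mul (by norm_num), ← Real.rpow_natCast,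
        ← Real.rpow_mul (by norm_num), ← Real.rpow_add (by norm_num)]
      congr 1
      push_cast
      ring
    rw [e]
    apply div_le_self (by positivity)
    have : (0:ℝ) < (2:ℝ)^(-(n:ℤ)) := by positivity
    linarith

structure Carl {X : Type*} [MeasurableSpace X] (m : Measure X) (s : X → ℝ) : Prop where
  meas : Measurable s
  pos : ∀ᵐ x ∂m, 0 < s x
  bd : ∃ C : ℝ≥0∞, C ≠ ⊤ ∧ ∀ x > 0, m {z | s z ≤ x} ≤ C * ENNReal.ofReal x

lemma Carl.dyadic {X : Type*} [MeasurableSpace X] {m : Measure X} {s : X → ℝ} (h : Carl m s)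
    (a : ℝ) (ha0 : 0 < a) (ha1 : a < 1) :
    ∃ D : ℝ≥0∞, D ≠ ⊤ ∧ ∀ y > 0,
      ∫⁻ x, ENNReal.ofReal ((s x)^(-a) * (s x + y)⁻¹) ∂m ≤ D * ENNReal.ofReal (y^(-a)) := by
  obtain ⟨C, hC, hb⟩ := h.bd
  set w : ℤ → ℝ := fun j : ℤ => ((2:ℝ)^j)^(-a) * (2:ℝ)^j / ((2:ℝ)^j + 1) with hw
  have hws := w_summable a ha0 ha1
  refine ⟨C * 2 * ∑' j, ENNReal.ofReal (w j), ?_, fun y hy => ?_⟩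
  · exact ENNReal.mul_ne_top (ENNReal.mul_ne_top hC (by norm_num)) hws.tsum_ofReal_ne_top
  set c : ℤ → ℝ := fun j => ((2:ℝ)^j * y)^(-a) * ((2:ℝ)^j * y + y)⁻¹ with hc
  set S : ℤ → Set X := fun j => {z | s z ≤ 2^(j+1) * y}
  have hS : ∀ j, MeasurableSet (S j) := fun j => measurableSet_le h.meas measurable_const
  calc ∫⁻ x, ENNReal.ofReal ((s x)^(-a) * (s x + y)⁻¹) ∂m
      ≤ ∫⁻ x, ∑' j, (S j).indicator (fun _ => ENNReal.ofReal (c j)) x ∂m := by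
        apply lintegral_mono_ae
        filter_upwards [h.pos] with x hx
        obtain ⟨j, hj1, hj2⟩ := exists_mem_Ioc_zpow (x := s x / y) (y := (2:ℝ)) (by positivity) (by norm_num)
        rw [lt_div_iff₀ hy] at hj1
        rw [div_le_iff₀ hy] at hj2
        refine le_trans ?_ (ENNReal.le_tsum j)
        rw [indicator_of_mem (show x ∈ S j from hj2)]
        apply ENNReal.ofReal_le_ofReal
        have : (s x)^(-a) ≤ ((2:ℝ)^j * y)^(-a) :=
          Real.rpow_le_rpow_of_nonpos (by positivity) hj1.le (by linarith)
        simp only [hc]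
        gcongr
    _ = ∑' j, ENNReal.ofReal (c j) * m (S j) := by
        rw [lintegral_tsum]
        · congr 1; ext j
          rw [lintegral_indicator (hS j)]; simp
        · intro j
          exact (measurable_const.indicator (hS j)).aemeasurable
    _ ≤ ∑' j, C * 2 * ENNReal.ofReal (y^(-a)) * ENNReal.ofReal (w j) := by
        apply ENNReal.tsum_le_tsum
        intro j
        calc ENNReal.ofReal (c j) * m (S j) ≤ ENNReal.ofReal (c j) * (C * ENNReal.ofReal (2^(j+1) * y)) := by
              gcongr; exact hb _ (by positivity)
          _ = C * ENNReal.ofReal (c j * (2^(j+1) * y)) := by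
              rw [ENNReal.ofReal_mul (p := c j) (by positivity)]; ring
          _ = C * ENNReal.ofReal (2 * (y^(-a) * w j)) := by
              congr 2
              simp only [hc, hw]
              rw [Real.mul_rpow (by positivity) hy.le, zpow_add₀ (by norm_num)]
              have : (2:ℝ)^j * y + y = ((2:ℝ)^j + 1) * y := by ring
              rw [this]
              field_simp
          _ = _ := by
              rw [ENNReal.ofReal_mul (by norm_num), ENNReal.ofReal_mul (by positivity)]
              simp; ring
    _ = _ := by
        rw [ENNReal.tsum_mul_left]; ring

lemma schur {X Y : Type*} [MeasurableSpace X] [MeasurableSpace Y] {m : Measure X} {n : Measure Y}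
    [SFinite m] [SFinite n] {s : X → ℝ} {u : Y → ℝ} (hs : Carl m s) (hu : Carl n u)
    (p : ℝ) (hp : 1 < p) :
    ∃ D : ℝ≥0∞, D ≠ ⊤ ∧ ∀ g : Y → ℝ≥0∞, Measurable g →
      ∫⁻ x, (∫⁻ y, g y * ENNReal.ofReal ((s x + u y)⁻¹) ∂n)^p ∂m ≤ D * ∫⁻ y, (g y)^p ∂n := by
  obtain ⟨q, hpq⟩ : ∃ q, p.HolderConjugate q := ⟨_, Real.HolderConjugate.conjExponent hp⟩
  have hp0 := hpq.pos
  have hq0 := hpq.symm.pos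
  have hq1 := hpq.symm.lt
  obtain ⟨D1, hD1, h1⟩ := hu.dyadic (1/p) (by positivity) (by rw [div_lt_one hp0]; exact hp)
  obtain ⟨D2, hD2, h2⟩ := hs.dyadic (1/q) (by positivity) (by rw [div_lt_one hq0]; exact hq1)
  have hpq1 : 1/p + 1/q = 1 := by simpa using hpq.inv_add_inv_eq_one
  have hpoverq : p / q = p - 1 := by
    field_simp at hpq1 ⊢; linarith
  refine ⟨D1^(p/q) * D2, ENNReal.mul_ne_top (ENNReal.rpow_ne_top_of_nonneg (by positivity) hD1) hD2, fun g hg => ?_⟩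
  have hsm := hs.meas
  have hum := hu.meas
  set K : X → Y → ℝ≥0∞ := fun x y => ENNReal.ofReal ((s x + u y)⁻¹) with hK
  have key : ∀ x, 0 < s x → (∫⁻ y, g y * K x y ∂n)^p ≤
      D1^(p/q) * (ENNReal.ofReal ((s x)^(-(1/q))) *
        ∫⁻ y, (g y)^p * K x y * ENNReal.ofReal ((u y)^(1/q)) ∂n) := by
    intro x hx
    have e1 : ∫⁻ y, g y * K x y ∂n ≤ (∫⁻ y, (g y)^p * K x y * ENNReal.ofReal ((u y)^(1/q)) ∂n)^(1/p)
        * (D1 * ENNReal.ofReal ((s x)^(-(1/p))))^(1/q) := by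
      calc ∫⁻ y, g y * K x y ∂n
          ≤ ∫⁻ y, ((fun y => g y * (K x y)^(1/p) * ENNReal.ofReal ((u y)^(1/(p*q)))) *
              (fun y => (K x y)^(1/q) * ENNReal.ofReal ((u y)^(-(1/(p*q)))))) y ∂n := by
            apply lintegral_mono_ae
            filter_upwards [hu.pos] with y hy
            have : g y * K x y = g y * ((K x y)^(1/p) * (K x y)^(1/q)) *
              (ENNReal.ofReal ((u y)^(1/(p*q))) * ENNReal.ofReal ((u y)^(-(1/(p*q))))) := by
              rw [← ENNReal.ofReal_mul (by positivity), ← Real.rpow_add hy,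
                ← ENNReal.rpow_add_of_nonneg _ _ (by positivity) (by positivity), hpq1]
              simp
            rw [this]
            apply le_of_eq
            simp only [Pi.mul_apply]
            ring
        _ ≤ _ := ENNReal.lintegral_mul_le_Lp_mul_Lq n hpq (by fun_prop) (by fun_prop)
        _ ≤ _ := by
            refine mul_le_mul' (ENNReal.rpow_le_rpow ?_ (by positivity)) (ENNReal.rpow_le_rpow ?_ (by positivity))
            · apply lintegral_mono_ae
              filter_upwards [hu.pos] with y hy
              rw [ENNReal.mul_rpow_of_nonneg _ _ hp0.le, ENNReal.mul_rpow_of_nonneg _ _ hp0.le,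
                ← ENNReal.rpow_mul, ENNReal.ofReal_rpow_of_nonneg (by positivity) hp0.le,
                ← Real.rpow_mul hy.le]
              rw [show 1/p*p = 1 by field_simp, ENNReal.rpow_one,
                show 1/(p*q)*p = 1/q by field_simp]
            · refine le_trans (le_of_eq ?_) (h1 (s x) hx)
              apply lintegral_congr_ae
              filter_upwards [hu.pos] with y hy
              rw [ENNReal.mul_rpow_of_nonneg _ _ hq0.le, 
                ← ENNReal.rpow_mul, ENNReal.ofReal_rpow_of_nonneg (by positivity) hq0.le,
                ← Real.rpow_mul hy.le, hK]
              rw [show 1/q*q = 1 by field_simp, ENNReal.rpow_one, mul_comm, ← ENNReal.ofReal_mul (by positivity)]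
              congr 2
              · congr 1; field_simp
              · rw [add_comm]
    calc _ ≤ ((∫⁻ y, (g y)^p * K x y * ENNReal.ofReal ((u y)^(1/q)) ∂n)^(1/p)
        * (D1 * ENNReal.ofReal ((s x)^(-(1/p))))^(1/q))^p := by gcongr
      _ = _ := by
        rw [ENNReal.mul_rpow_of_nonneg _ _ hp0.le, ← ENNReal.rpow_mul, ← ENNReal.rpow_mul,
          show 1/p*p = 1 by field_simp, ENNReal.rpow_one, show 1/q*p = p/q by ring,
          ENNReal.mul_rpow_of_nonneg _ _ (by positivity), ENNReal.ofReal_rpow_of_nonneg (by positivity) (by positivity),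
          ← Real.rpow_mul hx.le, show -(1/p) * (p/q) = -(1/q) by field_simp]
        ring
  calc _ ≤ ∫⁻ x, D1^(p/q) * (ENNReal.ofReal ((s x)^(-(1/q))) *
        ∫⁻ y, (g y)^p * K x y * ENNReal.ofReal ((u y)^(1/q)) ∂n) ∂m := by
        apply lintegral_mono_ae
        filter_upwards [hs.pos] with x hx using key x hx
    _ = D1^(p/q) * ∫⁻ x, (∫⁻ y, ENNReal.ofReal ((s x)^(-(1/q))) * ((g y)^p * K x y * ENNReal.ofReal ((u y)^(1/q))) ∂n) ∂m := by
        rw [lintegral_const_mul']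
        · congr 1
          apply lintegral_congr; intro x
          rw [lintegral_const_mul' _ _ ENNReal.ofReal_ne_top]
        · exact ENNReal.rpow_ne_top_of_nonneg (by positivity) hD1
    _ = D1^(p/q) * ∫⁻ y, (∫⁻ x, ENNReal.ofReal ((s x)^(-(1/q))) * ((g y)^p * K x y * ENNReal.ofReal ((u y)^(1/q))) ∂m) ∂n := by
        rw [lintegral_lintegral_swap]
        apply Measurable.aemeasurable
        simp only [Function.uncurry_def, hK]
        fun_prop
    _ ≤ D1^(p/q) * ∫⁻ y, D2 * (g y)^p ∂n := by
        refine mul_le_mul' le_rfl ?_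
        apply lintegral_mono_ae
        filter_upwards [hu.pos] with y hy
        calc _ = ∫⁻ x, (g y)^p * ENNReal.ofReal ((u y)^(1/q)) * ENNReal.ofReal ((s x)^(-(1/q)) * (s x + u y)⁻¹) ∂m := by
              apply lintegral_congr_ae
              filter_upwards [hs.pos] with x hx
              rw [ENNReal.ofReal_mul (by positivity)]; simp only [hK]; ring
          _ = (g y)^p * ENNReal.ofReal ((u y)^(1/q)) * ∫⁻ x, ENNReal.ofReal ((s x)^(-(1/q)) * (s x + u y)⁻¹) ∂m := by
              rw [lintegral_const_mul]
              fun_prop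
          _ ≤ (g y)^p * ENNReal.ofReal ((u y)^(1/q)) * (D2 * ENNReal.ofReal ((u y)^(-(1/q)))) := by
              gcongr; exact h2 _ hy
          _ = D2 * (g y)^p * (ENNReal.ofReal ((u y)^(1/q)) * ENNReal.ofReal ((u y)^(-(1/q)))) := by ring
          _ = _ := by
              rw [← ENNReal.ofReal_mul (by positivity), ← Real.rpow_add hy]; simp
    _ = _ := by
        rw [lintegral_const_mul' _ _ hD2, mul_assoc]

abbrev Tm : Measure ℝ := volume.restrict (Ioo 0 (2 * Real.pi))

def sg (θ : ℝ) : ℝ := min θ (2 * Real.pi - θ)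

lemma carlT : Carl Tm sg where
  meas := by unfold sg; fun_prop
  pos := by
    filter_upwards [ae_restrict_mem measurableSet_Ioo] with x hx
    exact lt_min hx.1 (by linarith [hx.2])
  bd := by
    refine ⟨2, by norm_num, fun x hx => ?_⟩
    have hm : MeasurableSet {z | sg z ≤ x} := measurableSet_le (by unfold sg; fun_prop) measurable_const
    rw [Measure.restrict_apply hm]
    calc volume ({z | sg z ≤ x} ∩ Ioo 0 (2 * Real.pi))
        ≤ volume (Icc 0 x ∪ Icc (2*Real.pi - x) (2*Real.pi)) := by
          apply measure_mono
          rintro z ⟨hz, h1, h2⟩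
          rcases min_le_iff.1 (show min z (2 * Real.pi - z) ≤ x from hz) with h | h
          · exact Or.inl ⟨h1.le, h⟩
          · exact Or.inr ⟨by linarith, h2.le⟩
      _ ≤ _ := measure_union_le _ _
      _ = _ := by simp [Real.volume_Icc, two_mul]

lemma carlMu {μ : Measure ℝ} [IsFiniteMeasure μ] (h : IsCarleson μ 1) :
    Carl (μ.restrict (Ico 0 1)) (fun t => 1 - t) where
  meas := by fun_prop
  pos := by
    filter_upwards [ae_restrict_mem measurableSet_Ico] with x hx
    linarith [hx.2]
  bd := by
    obtain ⟨C, hC, h⟩ := h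
    refine ⟨ENNReal.ofReal C, by simp, fun x hx => ?_⟩
    have hm : MeasurableSet {z : ℝ | 1 - z ≤ x} := measurableSet_le (by fun_prop) measurable_const
    rw [Measure.restrict_apply hm]
    have h1 := h (max 0 (1-x)) ⟨le_max_left _ _, max_lt (by norm_num) (by linarith)⟩
    rw [Real.rpow_one] at h1
    calc μ ({z : ℝ | 1 - z ≤ x} ∩ Ico 0 1) ≤ μ (Ico (max 0 (1-x)) 1) := by
          apply measure_mono
          rintro z ⟨hz, h1, h2⟩
          have : 1 - z ≤ x := hz
          exact ⟨max_le h1 (by linarith), h2⟩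
      _ = ENNReal.ofReal (μ (Ico (max 0 (1-x)) 1)).toReal := by
          rw [ENNReal.ofReal_toReal (measure_ne_top _ _)]
      _ ≤ ENNReal.ofReal (C * x) := by
          apply ENNReal.ofReal_le_ofReal
          refine h1.trans ?_
          gcongr
          linarith [le_max_right 0 (1-x)]
      _ = _ := ENNReal.ofReal_mul hC.le

lemma sg_le {θ : ℝ} (hθ : θ ∈ Ioo 0 (2 * Real.pi)) :
    sg θ ≤ Real.pi / 2 * ‖1 - Complex.exp (θ * Complex.I)‖ := by
  have hpi := Real.pi_pos
  rw [norm_sub_rev, mul_comm (θ:ℂ), Complex.norm_exp_I_mul_ofReal_sub_one, Real.norm_eq_abs]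
  refine le_trans ?_ (mul_le_mul_of_nonneg_left (le_abs_self _) (by positivity))
  have e : Real.pi / 2 * (2 * Real.sin (θ/2)) = Real.pi * Real.sin (θ/2) := by ring
  rw [e]
  rcases le_total θ Real.pi with h | h
  · have := Real.mul_le_sin (x := θ/2) (by linarith [hθ.1]) (by linarith)
    have h2 := mul_le_mul_of_nonneg_left this hpi.le
    refine (min_le_left _ _).trans (le_trans (le_of_eq ?_) h2)
    field_simp
  · have := Real.mul_le_sin (x := Real.pi - θ/2) (by linarith [hθ.2]) (by linarith)
    rw [Real.sin_pi_sub] at this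
    have h2 := mul_le_mul_of_nonneg_left this hpi.le
    refine (min_le_right _ _).trans (le_trans (le_of_eq ?_) h2)
    field_simp

lemma ker_lb {t θ : ℝ} (ht0 : 0 ≤ t) (ht1 : t ≤ 1) (hθ : θ ∈ Ioo 0 (2 * Real.pi)) :
    (1 - t) + sg θ ≤ 6 * ‖1 - t * Complex.exp (θ * Complex.I)‖ := by
  set e := Complex.exp (θ * Complex.I) with he
  have hn : ‖e‖ = 1 := Complex.norm_exp_ofReal_mul_I θ
  have h1 : 1 - t ≤ ‖1 - t * e‖ := by
    have := norm_sub_norm_le (1:ℂ) (t * e)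
    rw [norm_mul, hn, Complex.norm_real, Real.norm_of_nonneg ht0] at this
    simpa using this
  have h2 : ‖1 - e‖ ≤ ‖1 - t * e‖ + (1 - t) := by
    calc ‖1 - e‖ = ‖(1 - t * e) + -((1 - t : ℝ) * e)‖ := by congr 1; push_cast; ring
      _ ≤ _ := norm_add_le _ _
      _ = _ := by rw [norm_neg, norm_mul, hn, Complex.norm_real, Real.norm_of_nonneg (by linarith), mul_one]
  have h3 := sg_le hθ
  have hpi := Real.pi_pos
  have hpi4 := Real.pi_le_four
  rw [← he] at h3
  nlinarith [norm_nonneg (1 - t * e), mul_le_mul_of_nonneg_left (h2.trans (add_le_add_right h1 _)) hpi.le]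

lemma circMean_nonneg (p : ℝ) (f : ℂ → ℂ) (r : ℝ) : 0 ≤ circMean p f r := by
  unfold circMean
  apply Real.rpow_nonneg
  have := Real.pi_pos
  apply mul_nonneg (by positivity)
  apply intervalIntegral.integral_nonneg (by positivity)
  intro u _
  positivity

lemma cont_circ {f : ℂ → ℂ} (hf : ContinuousOn f (ball 0 1)) {r : ℝ} (hr : r ∈ Ico (0:ℝ) 1) :
    Continuous fun θ : ℝ => f (r * Complex.exp (θ * Complex.I)) := by
  apply hf.comp_continuous (by fun_prop)
  intro θ
  simp [Complex.norm_exp_ofReal_mul_I, abs_of_nonneg hr.1, hr.2]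

lemma lint_eq {p : ℝ} (hp : 0 < p) {g : ℝ → ℂ} (hg : Continuous g) :
    ∫⁻ θ, ‖g θ‖ₑ ^ p ∂Tm = ENNReal.ofReal (∫ θ in (0:ℝ)..(2 * Real.pi), ‖g θ‖ ^ p) := by
  have hpi := Real.pi_pos
  have hc : Continuous fun θ => ‖g θ‖ ^ p := by
    exact hg.norm.rpow_const (fun x => Or.inr hp.le)
  rw [intervalIntegral.integral_of_le (by positivity), integral_Ioc_eq_integral_Ioo,
    ofReal_integral_eq_lintegral_ofReal]
  · apply lintegral_congr
    intro θ
    rw [← ENNReal.ofReal_rpow_of_nonneg (norm_nonneg _) hp.le, ofReal_norm]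
  · exact (hc.integrableOn_Icc (a := 0) (b := 2 * Real.pi)).mono_set Ioo_subset_Icc_self
  · exact ae_of_all _ fun x => by positivity

lemma lint_cm {p : ℝ} (hp : 0 < p) {f : ℂ → ℂ} (hf : ContinuousOn f (ball 0 1)) {r : ℝ}
    (hr : r ∈ Ico (0:ℝ) 1) :
    ∫⁻ θ, ‖f (r * Complex.exp (θ * Complex.I))‖ₑ ^ p ∂Tm =
      ENNReal.ofReal (2 * Real.pi * (circMean p f r)^p) := by
  have hpi := Real.pi_pos
  rw [lint_eq hp (cont_circ hf hr), circMean, ← Real.rpow_mul]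
  · congr 1
    rw [show 1/p*p = 1 by field_simp, Real.rpow_one, mul_inv_cancel_left₀ (by positivity)]
  · apply mul_nonneg (by positivity)
    apply intervalIntegral.integral_nonneg (by positivity)
    intro u _
    positivity

lemma cm_le {p : ℝ} (hp : 0 < p) {f : ℂ → ℂ} (hf : ContinuousOn f (ball 0 1)) {r : ℝ}
    (hr : r ∈ Ico (0:ℝ) 1) {M : ℝ} (hM : 0 ≤ M)
    (h : ∫⁻ θ, ‖f (r * Complex.exp (θ * Complex.I))‖ₑ ^ p ∂Tm ≤ ENNReal.ofReal (2 * Real.pi * M^p)) :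
    circMean p f r ≤ M := by
  have hpi := Real.pi_pos
  rw [lint_cm hp hf hr, ENNReal.ofReal_le_ofReal_iff (by positivity)] at h
  have := le_of_mul_le_mul_left h (by positivity)
  exact (Real.rpow_le_rpow_iff (circMean_nonneg _ _ _) hM hp).1 this

lemma cm_le_norm {p : ℝ} {f : ℂ → ℂ} (h : MemHardy p f) {r : ℝ} (hr : r ∈ Ico (0:ℝ) 1) :
    circMean p f r ≤ hardyNorm p f := by
  obtain ⟨M, hM⟩ := h.2
  apply le_csSup
  · refine ⟨M, ?_⟩
    rintro x ⟨r, hr, rfl⟩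
    exact hM r hr
  · exact ⟨r, hr, rfl⟩

lemma norm_le {p : ℝ} {f : ℂ → ℂ} {M : ℝ} (h : ∀ r ∈ Ico (0:ℝ) 1, circMean p f r ≤ M) :
    hardyNorm p f ≤ M := by
  apply csSup_le
  · exact ⟨_, 0, by simp, rfl⟩
  · rintro x ⟨r, hr, rfl⟩
    exact h r hr

lemma hardyNorm_nonneg {p : ℝ} {f : ℂ → ℂ} (h : MemHardy p f) : 0 ≤ hardyNorm p f :=
  (circMean_nonneg p f 0).trans (cm_le_norm h (by simp))

lemma int_exp (m : ℤ) : ∫ θ in (0:ℝ)..(2 * Real.pi), Complex.exp (m * θ * Complex.I) =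
    if m = 0 then 2 * Real.pi else 0 := by
  split_ifs with h
  · subst h; simp
  · have hc : (m:ℂ) * Complex.I ≠ 0 := by simp [h]
    have := integral_exp_mul_complex (a := 0) (b := 2 * Real.pi) hc
    rw [show (fun θ : ℝ => Complex.exp (m * θ * Complex.I)) = fun θ : ℝ => Complex.exp (m * Complex.I * θ) by
      ext θ; ring_nf]
    rw [this]
    have : Complex.exp (m * Complex.I * ((2 * Real.pi : ℝ) : ℂ)) = 1 := by
      rw [Complex.exp_eq_one_iff]
      exact ⟨m, by push_cast; ring⟩
    rw [this]; simp

lemma coef_int {c : ℕ → ℂ} {F : ℂ → ℂ} {r : ℝ} (hr : 0 ≤ r) (hs : Summable fun n => ‖c n‖ * r^n)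
    (hF : ∀ θ : ℝ, F (r * Complex.exp (θ * Complex.I)) = ∑' n, c n * (r * Complex.exp (θ * Complex.I))^n)
    (k : ℕ) :
    ∫ θ in (0:ℝ)..(2 * Real.pi), F (r * Complex.exp (θ * Complex.I)) * Complex.exp (-k * θ * Complex.I)
      = 2 * Real.pi * (c k * r^k) := by
  have hpi := Real.pi_pos
  set G : ℕ → C(ℝ, ℂ) := fun n => ⟨fun θ => c n * (r * Complex.exp (θ * Complex.I))^n * Complex.exp (-k * θ * Complex.I), by fun_prop⟩ with hG
  have hGn : ∀ n θ, ‖G n θ‖ ≤ ‖c n‖ * r^n := by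
    intro n θ
    have : ‖Complex.exp (-k * θ * Complex.I)‖ = 1 := by
      have := Complex.norm_exp_ofReal_mul_I (-k * θ)
      push_cast at this; exact this
    simp only [hG, ContinuousMap.coe_mk, norm_mul, norm_pow, this, Complex.norm_exp_ofReal_mul_I,
      Complex.norm_real, Real.norm_of_nonneg hr]
    simp
  have H := intervalIntegral.hasSum_intervalIntegral_of_summable_norm (a := 0) (b := 2 * Real.pi) (f := G) ?_
  · have e1 : ∫ θ in (0:ℝ)..(2 * Real.pi), ∑' n, G n θ = ∫ θ in (0:ℝ)..(2 * Real.pi), F (r * Complex.exp (θ * Complex.I)) * Complex.exp (-k * θ * Complex.I) := by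
      apply intervalIntegral.integral_congr
      intro θ _
      simp only [hG, ContinuousMap.coe_mk]
      rw [tsum_mul_right, hF]
    have e2 : ∀ n, ∫ θ in (0:ℝ)..(2 * Real.pi), G n θ = if n = k then 2 * Real.pi * (c k * r^k) else 0 := by
      intro n
      have : ∀ θ : ℝ, G n θ = c n * r^n * Complex.exp (((n - k : ℤ):ℂ) * θ * Complex.I) := by
        intro θ
        simp only [hG, ContinuousMap.coe_mk]
        rw [mul_pow, ← Complex.exp_nat_mul, mul_assoc, mul_assoc, ← Complex.exp_add, ← mul_assoc]
        congr 2; push_cast; ring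
      simp_rw [this]
      rw [intervalIntegral.integral_const_mul, int_exp]
      by_cases hnk : n = k
      · subst hnk; simp; ring
      · have : (n:ℤ) - k ≠ 0 := by omega
        simp [this, hnk]
    rw [e1] at H
    simp_rw [e2] at H
    exact H.unique (hasSum_ite_eq k _)
  · refine Summable.of_nonneg_of_le (fun _ => norm_nonneg _) (fun n => ?_) hs
    apply (ContinuousMap.norm_le _ (by positivity)).2
    rintro ⟨θ, h⟩
    exact hGn n θ

def trig (b : ℕ → ℂ) (N : ℕ) (θ : ℝ) : ℂ := ∑ k ∈ Finset.range N, b k * Complex.exp (-k * θ * Complex.I)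

lemma trig_cont (b : ℕ → ℂ) (N : ℕ) : Continuous (trig b N) := by unfold trig; fun_prop

lemma pair_int {c : ℕ → ℂ} {F : ℂ → ℂ} {r : ℝ} (hr : 0 ≤ r) (hs : Summable fun n => ‖c n‖ * r^n)
    (hF : ∀ θ : ℝ, F (r * Complex.exp (θ * Complex.I)) = ∑' n, c n * (r * Complex.exp (θ * Complex.I))^n)
    (hFc : Continuous fun θ : ℝ => F (r * Complex.exp (θ * Complex.I))) (b : ℕ → ℂ) (N : ℕ) :
    ∫ θ in (0:ℝ)..(2 * Real.pi), F (r * Complex.exp (θ * Complex.I)) * trig b N θ =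
      2 * Real.pi * ∑ k ∈ Finset.range N, b k * c k * r^k := by
  simp only [trig, Finset.mul_sum]
  rw [intervalIntegral.integral_finsetSum]
  · apply Finset.sum_congr rfl
    intro k _
    have := coef_int hr hs hF k
    rw [show 2 * (Real.pi:ℂ) * (b k * c k * r^k) = b k * (2 * Real.pi * (c k * r^k)) by ring, ← this,
      ← intervalIntegral.integral_const_mul]
    congr 1; ext θ; ring
  · intro k _
    apply Continuous.intervalIntegrable
    exact hFc.mul (by fun_prop)

lemma pair_le {c : ℕ → ℂ} {F : ℂ → ℂ} {r : ℝ} (hr : 0 ≤ r) (hs : Summable fun n => ‖c n‖ * r^n)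
    (hF : ∀ θ : ℝ, F (r * Complex.exp (θ * Complex.I)) = ∑' n, c n * (r * Complex.exp (θ * Complex.I))^n)
    (hFc : Continuous fun θ : ℝ => F (r * Complex.exp (θ * Complex.I))) (b : ℕ → ℂ) (N : ℕ)
    {p q : ℝ} (hpq : p.HolderConjugate q) :
    ‖∑ k ∈ Finset.range N, b k * c k * r^k‖ₑ ≤
      (∫⁻ θ, ‖F (r * Complex.exp (θ * Complex.I))‖ₑ^p ∂Tm)^(1/p) *
      (∫⁻ θ, ‖trig b N θ‖ₑ^q ∂Tm)^(1/q) := by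
  have hpi := Real.pi_pos
  have h := pair_int hr hs hF hFc b N
  have hQ := trig_cont b N
  calc ‖∑ k ∈ Finset.range N, b k * c k * r^k‖ₑ ≤ ‖(2 * Real.pi:ℂ) * ∑ k ∈ Finset.range N, b k * c k * r^k‖ₑ := by
        rw [enorm_mul]
        apply le_mul_of_one_le_left (by positivity)
        rw [← ofReal_norm, ENNReal.one_le_ofReal]
        simp [abs_of_pos hpi]
        linarith [Real.pi_gt_three]
    _ = ‖∫ θ in Ioo (0:ℝ) (2 * Real.pi), F (r * Complex.exp (θ * Complex.I)) * trig b N θ‖ₑ := by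
        rw [← h, intervalIntegral.integral_of_le (by positivity), integral_Ioc_eq_integral_Ioo]
    _ ≤ ∫⁻ θ, ‖F (r * Complex.exp (θ * Complex.I)) * trig b N θ‖ₑ ∂Tm := enorm_integral_le_lintegral_enorm _
    _ = ∫⁻ θ, ((fun θ : ℝ => ‖F (r * Complex.exp (θ * Complex.I))‖ₑ) * (fun θ => ‖trig b N θ‖ₑ)) θ ∂Tm := by
        simp [enorm_mul]
    _ ≤ _ := ENNReal.lintegral_mul_le_Lp_mul_Lq _ hpq hFc.enorm.measurable.aemeasurable
        hQ.enorm.measurable.aemeasurable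

lemma tc_hasSum {f : ℂ → ℂ} (hf : DifferentiableOn ℂ f (ball 0 1)) {z : ℂ} (hz : z ∈ ball (0:ℂ) 1) :
    HasSum (fun n => tc f n * z^n) (f z) := by
  have := Complex.hasSum_taylorSeries_on_ball hf hz
  have e : (fun n => tc f n * z^n) = fun n : ℕ => (n.factorial : ℂ)⁻¹ • (z - 0)^n • iteratedDeriv n f 0 := by
    ext n
    simp only [tc, sub_zero, smul_eq_mul]
    ring
  rw [e]; exact this

lemma tc_summable {f : ℂ → ℂ} (hf : DifferentiableOn ℂ f (ball 0 1)) {r : ℝ} (hr : r ∈ Ico (0:ℝ) 1) :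
    Summable fun n => ‖tc f n‖ * r^n := by
  have := (tc_hasSum hf (z := r) (by simp [abs_of_nonneg hr.1, hr.2])).summable.norm
  simpa [norm_mul, abs_of_nonneg hr.1] using this

lemma trig_L2 {b : ℕ → ℂ} {t : ℝ} (ht : t ∈ Ico (0:ℝ) 1) (hb : ∀ k, ‖b k‖ ≤ t^k) (N : ℕ) :
    ∫⁻ θ, ‖trig b N θ‖ₑ^(2:ℝ) ∂Tm ≤ ENNReal.ofReal (2 * Real.pi / (1 - t)) := by
  have hpi := Real.pi_pos
  rw [lint_eq (by norm_num) (trig_cont b N)]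
  apply ENNReal.ofReal_le_ofReal
  set c : ℕ → ℂ := fun k => if k ∈ Finset.range N then (starRingEnd ℂ) (b k) else 0 with hc
  set F : ℂ → ℂ := fun z => ∑ k ∈ Finset.range N, (starRingEnd ℂ) (b k) * z^k with hF
  have h := pair_int (c := c) (F := F) (r := 1) (by norm_num) ?_ ?_ ?_ b N
  · have e1 : ∀ θ : ℝ, F ((1:ℝ) * Complex.exp (θ * Complex.I)) * trig b N θ = ((‖trig b N θ‖^(2:ℝ) : ℝ) : ℂ) := by
      intro θ
      have : F ((1:ℝ) * Complex.exp (θ * Complex.I)) = (starRingEnd ℂ) (trig b N θ) := by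
        simp only [hF, trig, map_sum, map_mul, ← Complex.exp_conj]
        apply Finset.sum_congr rfl
        intro k _
        simp [← Complex.exp_nat_mul]
        left; ring_nf
      rw [this, mul_comm, Complex.mul_conj, Complex.normSq_eq_norm_sq]
      norm_num
    simp_rw [e1] at h
    rw [intervalIntegral.integral_ofReal] at h
    have e2 : ∑ k ∈ Finset.range N, b k * c k * ((1:ℝ):ℂ)^k = ((∑ k ∈ Finset.range N, ‖b k‖^2 : ℝ) : ℂ) := by
      push_cast
      apply Finset.sum_congr rfl
      intro k hk
      simp only [hc, if_pos hk]
      rw [Complex.mul_conj, Complex.normSq_eq_norm_sq]; simp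
    rw [e2] at h
    have h' : ∫ θ in (0:ℝ)..(2 * Real.pi), ‖trig b N θ‖^(2:ℝ) = 2 * Real.pi * ∑ k ∈ Finset.range N, ‖b k‖^2 := by
      exact_mod_cast h
    rw [h', div_eq_mul_inv]
    apply mul_le_mul_of_nonneg_left _ (by positivity)
    calc ∑ k ∈ Finset.range N, ‖b k‖^2 ≤ ∑ k ∈ Finset.range N, t^k := by
          apply Finset.sum_le_sum
          intro k _
          have h1 := hb k
          have h2 : t^k ≤ 1 := pow_le_one₀ ht.1 ht.2.le
          nlinarith [norm_nonneg (b k)]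
      _ ≤ ∑' k, t^k := (summable_geometric_of_lt_one ht.1 ht.2).sum_le_tsum _ (fun k _ => pow_nonneg ht.1 k)
      _ = _ := tsum_geometric_of_lt_one ht.1 ht.2
  · apply summable_of_ne_finset_zero (s := Finset.range N)
    intro k hk
    simp only [hc, if_neg hk]; simp
  · intro θ
    rw [tsum_eq_sum (s := Finset.range N)]
    · apply Finset.sum_congr rfl
      intro k hk
      simp only [hc, if_pos hk]
    · intro k hk
      simp only [hc, if_neg hk]; simp
  · simp only [hF]; fun_prop

lemma trig_sup {b : ℕ → ℂ} {t : ℝ} (ht : t ∈ Ico (0:ℝ) 1) (hb : ∀ k, ‖b k‖ ≤ t^k) (N : ℕ) (θ : ℝ) :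
    ‖trig b N θ‖ ≤ (1 - t)⁻¹ := by
  calc ‖trig b N θ‖ ≤ ∑ k ∈ Finset.range N, t^k := by
        refine (norm_sum_le _ _).trans (Finset.sum_le_sum fun k _ => ?_)
        have : ‖Complex.exp (-k * θ * Complex.I)‖ = 1 := by
          have := Complex.norm_exp_ofReal_mul_I (-k * θ)
          push_cast at this; exact this
        rw [norm_mul, this, mul_one]; exact hb k
    _ ≤ ∑' k, t^k := (summable_geometric_of_lt_one ht.1 ht.2).sum_le_tsum _ (fun k _ => pow_nonneg ht.1 k)
    _ = _ := tsum_geometric_of_lt_one ht.1 ht.2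

lemma trig_Lq {b : ℕ → ℂ} {t : ℝ} (ht : t ∈ Ico (0:ℝ) 1) (hb : ∀ k, ‖b k‖ ≤ t^k) (N : ℕ)
    {q : ℝ} (hq : 2 ≤ q) :
    ∫⁻ θ, ‖trig b N θ‖ₑ^q ∂Tm ≤ ENNReal.ofReal (2 * Real.pi * (1 - t)^(1-q)) := by
  have ht1 : 0 < 1 - t := by linarith [ht.2]
  have hpi := Real.pi_pos
  calc ∫⁻ θ, ‖trig b N θ‖ₑ^q ∂Tm ≤ ∫⁻ θ, ENNReal.ofReal ((1-t)^(2-q)) * ‖trig b N θ‖ₑ^(2:ℝ) ∂Tm := by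
        apply lintegral_mono
        intro θ
        simp only
        calc ‖trig b N θ‖ₑ^q = ‖trig b N θ‖ₑ^(q-2) * ‖trig b N θ‖ₑ^(2:ℝ) := by
              rw [← ENNReal.rpow_add_of_nonneg _ _ (by linarith) (by norm_num)]; congr 1; ring
          _ ≤ _ := by
              gcongr
              rw [← ofReal_norm, ENNReal.ofReal_rpow_of_nonneg (norm_nonneg _) (by linarith)]
              apply ENNReal.ofReal_le_ofReal
              calc _ ≤ ((1-t)⁻¹)^(q-2) := Real.rpow_le_rpow (norm_nonneg _) (trig_sup ht hb N θ) (by linarith)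
                _ = _ := by rw [Real.inv_rpow ht1.le, ← Real.rpow_neg ht1.le]; congr 1; ring
    _ = ENNReal.ofReal ((1-t)^(2-q)) * ∫⁻ θ, ‖trig b N θ‖ₑ^(2:ℝ) ∂Tm := by
        rw [lintegral_const_mul' _ _ ENNReal.ofReal_ne_top]
    _ ≤ ENNReal.ofReal ((1-t)^(2-q)) * ENNReal.ofReal (2 * Real.pi / (1 - t)) := by
        gcongr; exact trig_L2 ht hb N
    _ = _ := by
        rw [← ENNReal.ofReal_mul (by positivity)]
        congr 1
        rw [show 2 - q = (1-q) + 1 by ring, Real.rpow_add ht1, Real.rpow_one]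
        field_simp

lemma A_bound {p : ℝ} (hp : 1 < p) {f : ℂ → ℂ} (hf : MemHardy p f) :
    ∃ B b : ℝ, 0 ≤ B ∧ 0 < b ∧ b < 1 ∧ ∀ t ∈ Ico (0:ℝ) 1, ∀ N,
      ∑ k ∈ Finset.range N, ‖tc f k‖ * t^k ≤ B * (1-t)^(-b) := by
  have hpi := Real.pi_pos
  set p1 := min p 2 with hp1
  have hp11 : 1 < p1 := lt_min hp (by norm_num)
  have hp12 : p1 ≤ 2 := min_le_right _ _
  have hp1p : p1 ≤ p := min_le_left _ _
  obtain ⟨q, hpq⟩ : ∃ q, p1.HolderConjugate q := ⟨_, Real.HolderConjugate.conjExponent hp11⟩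
  have hp0 := hpq.pos
  have hq0 := hpq.symm.pos
  have hpq1 : p1⁻¹ + q⁻¹ = 1 := hpq.inv_add_inv_eq_one
  have hq2 : 2 ≤ q := by
    have h1 : 2⁻¹ ≤ p1⁻¹ := inv_anti₀ hp0 hp12
    have : q⁻¹ ≤ 2⁻¹ := by norm_num at h1 ⊢; linarith
    exact (inv_le_inv₀ hq0 (by norm_num)).1 this
  set L : ℝ := 2 * Real.pi + 2 * Real.pi * (hardyNorm p f)^p with hL
  have hN := hardyNorm_nonneg hf
  have hfc := hf.1.continuousOn
  have hLb : ∀ r ∈ Ico (0:ℝ) 1, ∫⁻ θ, ‖f (r * Complex.exp (θ * Complex.I))‖ₑ^p1 ∂Tm ≤ ENNReal.ofReal L := by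
    intro r hr
    calc ∫⁻ θ, ‖f (r * Complex.exp (θ * Complex.I))‖ₑ^p1 ∂Tm
        ≤ ∫⁻ θ, (1 + ‖f (r * Complex.exp (θ * Complex.I))‖ₑ^p) ∂Tm := by
          apply lintegral_mono
          intro θ
          simp only
          rcases le_total ‖f (r * Complex.exp (θ * Complex.I))‖ₑ 1 with h | h
          · exact (ENNReal.rpow_le_one h hp0.le).trans le_self_add
          · exact (ENNReal.rpow_le_rpow_of_exponent_le h hp1p).trans le_add_self
      _ = ENNReal.ofReal (2 * Real.pi) + ENNReal.ofReal (2 * Real.pi * (circMean p f r)^p) := by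
          rw [lintegral_add_left measurable_const, lint_cm (by linarith) hfc hr]
          simp
      _ ≤ _ := by
          have := circMean_nonneg p f r
          rw [← ENNReal.ofReal_add (by positivity) (by positivity)]
          apply ENNReal.ofReal_le_ofReal
          have := cm_le_norm hf hr
          rw [hL]
          gcongr
  refine ⟨L^(1/p1) * (2 * Real.pi)^(1/q), 1/p1, by positivity, by positivity, by rw [div_lt_one hp0]; exact hp11, fun t ht N => ?_⟩
  have ht1 : 0 < 1 - t := by linarith [ht.2]
  set b : ℕ → ℂ := fun k => t^k * ((starRingEnd ℂ) (tc f k) / ‖tc f k‖) with hb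
  have hbn : ∀ k, ‖b k‖ ≤ t^k := by
    intro k
    simp only [hb, norm_mul, norm_pow, norm_div, RCLike.norm_conj, Complex.norm_real, norm_norm, Real.norm_of_nonneg ht.1]
    exact mul_le_of_le_one_right (pow_nonneg ht.1 _) (div_self_le_one _)
  have hbc : ∀ k, b k * tc f k = ((‖tc f k‖ * t^k : ℝ) : ℂ) := by
    intro k
    simp only [hb]
    rcases eq_or_ne (tc f k) 0 with h | h
    · simp [h]
    · have : (‖tc f k‖ : ℂ) ≠ 0 := by simpa using h
      have h2 : (starRingEnd ℂ) (tc f k) * tc f k = ‖tc f k‖^2 := by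
        rw [mul_comm, Complex.mul_conj, Complex.normSq_eq_norm_sq]; simp
      field_simp
      rw [mul_assoc, h2]; push_cast; ring
  have key : ∀ r ∈ Ioo (0:ℝ) 1, ∑ k ∈ Finset.range N, ‖tc f k‖ * t^k * r^k ≤ L^(1/p1) * (2 * Real.pi)^(1/q) * (1-t)^(-(1/p1)) := by
    intro r hr
    have hr' : r ∈ Ico (0:ℝ) 1 := ⟨hr.1.le, hr.2⟩
    have h := pair_le hr.1.le (tc_summable hf.1 hr') (fun θ => ((tc_hasSum hf.1 (by
      simp [Complex.norm_exp_ofReal_mul_I, abs_of_pos hr.1, hr.2])).tsum_eq).symm) (cont_circ hfc hr') b N hpq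
    have e : ∑ k ∈ Finset.range N, b k * tc f k * (r:ℂ)^k = ((∑ k ∈ Finset.range N, ‖tc f k‖ * t^k * r^k : ℝ) : ℂ) := by
      push_cast
      apply Finset.sum_congr rfl
      intro k _
      rw [hbc]; push_cast; ring
    rw [e, ← ofReal_norm, Complex.norm_real, Real.norm_of_nonneg (by
      have := ht.1; have := hr.1; positivity)] at h
    have h2 := h.trans (mul_le_mul' (ENNReal.rpow_le_rpow (hLb r hr') (by positivity)) (ENNReal.rpow_le_rpow (trig_Lq ht hbn N hq2) (by positivity)))
    rw [ENNReal.ofReal_rpow_of_nonneg (by positivity) (by positivity), ENNReal.ofReal_rpow_of_nonneg (by positivity) (by positivity),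
      ← ENNReal.ofReal_mul (by positivity), ENNReal.ofReal_le_ofReal_iff (by positivity), Real.mul_rpow (by positivity) (by positivity),
      ← Real.rpow_mul ht1.le, show (1-q)*(1/q) = -(1/p1) by
        have : (1-q)*(1/q) = q⁻¹ - 1 := by field_simp
        rw [this, one_div]; linarith] at h2
    linarith
  have ev : ∀ᶠ r in nhdsWithin (1:ℝ) (Iio 1), ∑ k ∈ Finset.range N, ‖tc f k‖ * t^k * r^k ≤ L^(1/p1) * (2 * Real.pi)^(1/q) * (1-t)^(-(1/p1)) := by
    filter_upwards [Ioo_mem_nhdsLT (show (0:ℝ) < 1 by norm_num)] with r hr using key r hr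
  refine le_of_tendsto ?_ ev
  have hcont : Continuous fun r : ℝ => ∑ k ∈ Finset.range N, ‖tc f k‖ * t^k * r^k := by fun_prop
  have := (hcont.tendsto 1).mono_left (nhdsWithin_le_nhds (s := Iio 1))
  simpa using this


lemma cauchy_bd {f : ℂ → ℂ} (hf : DifferentiableOn ℂ f (ball 0 1)) {R t : ℝ} (hR : R ∈ Ioo (0:ℝ) 1)
    (ht : t ∈ Ico (0:ℝ) 1) :
    ‖f ((R * t : ℝ))‖ₑ ≤ 6 * ∫⁻ θ, ‖f (R * Complex.exp (θ * Complex.I))‖ₑ * ENNReal.ofReal ((1 - t + sg θ)⁻¹) ∂Tm := by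
  have hpi := Real.pi_pos
  have hw : ((R * t : ℝ) : ℂ) ∈ ball (0:ℂ) R := by
    simp only [mem_ball, dist_zero_right, Complex.norm_real, Real.norm_of_nonneg (mul_nonneg hR.1.le ht.1)]
    nlinarith [hR.1, ht.2]
  have hd : DiffContOnCl ℂ f (ball 0 R) := by
    apply DifferentiableOn.diffContOnCl
    rw [closure_ball _ hR.1.ne']
    exact hf.mono (closedBall_subset_ball hR.2)
  have h := hd.circleIntegral_sub_inv_smul hw
  rw [circleIntegral, intervalIntegral.integral_of_le (by positivity), integral_Ioc_eq_integral_Ioo] at h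
  calc ‖f ((R * t : ℝ))‖ₑ ≤ ‖(2 * Real.pi * Complex.I : ℂ) • f ((R * t : ℝ))‖ₑ := by
        rw [enorm_smul]
        apply le_mul_of_one_le_left (by positivity)
        rw [← ofReal_norm, ENNReal.one_le_ofReal]
        simp [abs_of_pos hpi]
        linarith [Real.pi_gt_three]
    _ ≤ ∫⁻ θ in Ioo 0 (2 * Real.pi), ‖deriv (circleMap 0 R) θ • (circleMap 0 R θ - (R * t : ℝ))⁻¹ • f (circleMap 0 R θ)‖ₑ := by
        rw [← h]; exact enorm_integral_le_lintegral_enorm _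
    _ ≤ ∫⁻ θ, 6 * (‖f (R * Complex.exp (θ * Complex.I))‖ₑ * ENNReal.ofReal ((1 - t + sg θ)⁻¹)) ∂Tm := by
        apply lintegral_mono_ae
        filter_upwards [ae_restrict_mem measurableSet_Ioo] with θ hθ
        have hk := ker_lb ht.1 ht.2.le hθ
        have hs : 0 < 1 - t + sg θ := by
          have : 0 < sg θ := lt_min hθ.1 (by linarith [hθ.2])
          linarith [ht.2]
        set e := Complex.exp (θ * Complex.I) with he
        have hn : ‖e‖ = 1 := Complex.norm_exp_ofReal_mul_I θ
        have hcm : circleMap 0 R θ = R * e := by simp [circleMap, he]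
        have e1 : ‖e - t‖ = ‖1 - t * e‖ := by
          have : e - t = e * (starRingEnd ℂ) (1 - t * e) := by
            have : e * (starRingEnd ℂ) e = 1 := by rw [Complex.mul_conj, Complex.normSq_eq_norm_sq, hn]; simp
            simp only [map_sub, map_one, map_mul, Complex.conj_ofReal]
            linear_combination t * this
          rw [this, norm_mul, hn, RCLike.norm_conj, one_mul]
        rw [deriv_circleMap, hcm, enorm_smul, enorm_smul, ← mul_assoc, mul_comm _ ‖f _‖ₑ, mul_left_comm 6]
        refine mul_le_mul' le_rfl ?_
        rw [← ofReal_norm, ← ofReal_norm, ← ENNReal.ofReal_mul (norm_nonneg _)]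
        rw [show (6:ℝ≥0∞) = ENNReal.ofReal 6 by norm_num, ← ENNReal.ofReal_mul (by norm_num)]
        apply ENNReal.ofReal_le_ofReal
        have e2 : R * e - ((R * t : ℝ):ℂ) = R * (e - t) := by push_cast; ring
        rw [e2, norm_inv, norm_mul, norm_mul, norm_mul, e1, hn, Complex.norm_I, Complex.norm_real, Real.norm_of_nonneg hR.1.le]
        have hpos : 0 < ‖1 - t * e‖ := by linarith
        have hR0 := hR.1
        rw [show R * 1 * 1 * (R * ‖1 - t * e‖)⁻¹ = ‖1 - t * e‖⁻¹ by field_simp]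
        rw [← div_eq_mul_inv, inv_eq_one_div, div_le_div_iff₀ hpos hs]
        linarith
    _ = _ := by rw [lintegral_const_mul' _ _ (by norm_num)]

lemma embed {μ : Measure ℝ} [IsFiniteMeasure μ] (hμ : IsCarleson μ 1) {p : ℝ} (hp : 1 < p) :
    ∃ D : ℝ≥0∞, D ≠ ⊤ ∧ ∀ f : ℂ → ℂ, MemHardy p f →
      ∫⁻ t in Ico (0:ℝ) 1, ‖f t‖ₑ^p ∂μ ≤ D * ENNReal.ofReal ((hardyNorm p f)^p) := by
  have hpi := Real.pi_pos
  obtain ⟨D, hD, h⟩ := schur (carlMu hμ) carlT p hp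
  refine ⟨6^p * (D * ENNReal.ofReal (2 * Real.pi)), ?_, fun f hf => ?_⟩
  · exact ENNReal.mul_ne_top (ENNReal.rpow_ne_top_of_nonneg (by linarith) (by norm_num)) (ENNReal.mul_ne_top hD ENNReal.ofReal_ne_top)
  have hfc := hf.1.continuousOn
  have hN := hardyNorm_nonneg hf
  have key : ∀ R ∈ Ioo (0:ℝ) 1, ∫⁻ t in Ico (0:ℝ) 1, ‖f ((R * t : ℝ))‖ₑ^p ∂μ ≤ 6^p * (D * ENNReal.ofReal (2 * Real.pi)) * ENNReal.ofReal ((hardyNorm p f)^p) := by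
    intro R hR
    have hR' : R ∈ Ico (0:ℝ) 1 := ⟨hR.1.le, hR.2⟩
    calc _ ≤ ∫⁻ t in Ico (0:ℝ) 1, 6^p * (∫⁻ θ, ‖f (R * Complex.exp (θ * Complex.I))‖ₑ * ENNReal.ofReal ((1 - t + sg θ)⁻¹) ∂Tm)^p ∂μ := by
          apply lintegral_mono_ae
          filter_upwards [ae_restrict_mem measurableSet_Ico] with t ht
          rw [← ENNReal.mul_rpow_of_nonneg _ _ (by linarith)]
          exact ENNReal.rpow_le_rpow (cauchy_bd hf.1 hR ht) (by linarith)
      _ = 6^p * ∫⁻ t in Ico (0:ℝ) 1, (∫⁻ θ, ‖f (R * Complex.exp (θ * Complex.I))‖ₑ * ENNReal.ofReal ((1 - t + sg θ)⁻¹) ∂Tm)^p ∂μ :=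
          lintegral_const_mul' _ _ (ENNReal.rpow_ne_top_of_nonneg (by linarith) (by norm_num))
      _ ≤ 6^p * (D * ∫⁻ θ, ‖f (R * Complex.exp (θ * Complex.I))‖ₑ^p ∂Tm) := by
          refine mul_le_mul' le_rfl ?_
          exact h _ (cont_circ hfc hR').enorm.measurable
      _ ≤ 6^p * (D * (ENNReal.ofReal (2 * Real.pi) * ENNReal.ofReal ((hardyNorm p f)^p))) := by
          rw [lint_cm (by linarith) hfc hR', ← ENNReal.ofReal_mul (by positivity)]
          have := circMean_nonneg p f R
          have := cm_le_norm hf hR'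
          gcongr
      _ = _ := by ring
  set R : ℕ → ℝ := fun n => 1 - 1 / ((n:ℝ) + 2) with hRdef
  have hR : ∀ n, R n ∈ Ioo (0:ℝ) 1 := by
    intro n
    have : (0:ℝ) < (n:ℝ) + 2 := by positivity
    constructor
    · simp only [hRdef, sub_pos]; rw [div_lt_one this]; linarith [Nat.cast_nonneg (α := ℝ) n]
    · simp only [hRdef]; linarith [show 0 < 1 / ((n:ℝ) + 2) by positivity]
  have hRt : Filter.Tendsto R Filter.atTop (nhds 1) := by
    have h0 : Filter.Tendsto (fun n : ℕ => 1 / ((n:ℝ) + 2)) Filter.atTop (nhds 0) := by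
      have := (tendsto_one_div_add_atTop_nhds_zero_nat (𝕜 := ℝ)).comp (Filter.tendsto_add_atTop_nat 1)
      refine this.congr fun n => ?_
      simp; ring
    have := h0.const_sub 1
    rwa [sub_zero] at this
  have hmem : ∀ c ∈ Ioc (0:ℝ) 1, ∀ t ∈ Ico (0:ℝ) 1, ((c * t : ℝ):ℂ) ∈ ball (0:ℂ) 1 := by
    intro c hc t ht
    simp only [mem_ball, dist_zero_right, Complex.norm_real, Real.norm_of_nonneg (mul_nonneg hc.1.le ht.1)]
    nlinarith [hc.1, hc.2, ht.1, ht.2]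
  calc ∫⁻ t in Ico (0:ℝ) 1, ‖f t‖ₑ^p ∂μ
      = ∫⁻ t in Ico (0:ℝ) 1, Filter.liminf (fun n => ‖f ((R n * t : ℝ))‖ₑ^p) Filter.atTop ∂μ := by
        apply lintegral_congr_ae
        filter_upwards [ae_restrict_mem measurableSet_Ico] with t ht
        have h1 : ContinuousAt f t := hfc.continuousAt (isOpen_ball.mem_nhds (by
          have := hmem 1 (by simp) t ht
          simpa using this))
        have h2 : Filter.Tendsto (fun n => ((R n * t : ℝ):ℂ)) Filter.atTop (nhds (t:ℂ)) := by
          have := (Complex.continuous_ofReal.tendsto _).comp (hRt.mul_const t)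
          rw [one_mul] at this
          exact this
        exact (((ENNReal.continuous_rpow_const (y := p)).tendsto _).comp (h1.tendsto.comp h2).enorm).liminf_eq.symm
    _ ≤ Filter.liminf (fun n => ∫⁻ t in Ico (0:ℝ) 1, ‖f ((R n * t : ℝ))‖ₑ^p ∂μ) Filter.atTop := by
        apply lintegral_liminf_le'
        intro n
        have : ContinuousOn (fun t : ℝ => f ((R n * t : ℝ))) (Ico 0 1) := by
          apply hfc.comp (by fun_prop)
          intro t ht
          exact hmem _ ⟨(hR n).1, (hR n).2.le⟩ t ht
        exact (this.aemeasurable measurableSet_Ico).enorm.pow_const p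
    _ ≤ _ := by
        apply Filter.liminf_le_of_le (by isBoundedDefault)
        intro b hb
        obtain ⟨n, hn⟩ := hb.exists
        exact hn.trans (key _ (hR n))

lemma Carl.integrable_mu {μ : Measure ℝ} [IsFiniteMeasure μ] (hμ : IsCarleson μ 1) {b : ℝ} (h0 : 0 < b) (h1 : b < 1) :
    Integrable (fun t : ℝ => (1-t)^(-b)) (μ.restrict (Ico 0 1)) := by
  obtain ⟨D, hD, h⟩ := (carlMu hμ).dyadic b h0 h1
  have hy := h 1 one_pos
  refine ⟨by apply Measurable.aestronglyMeasurable; fun_prop, ?_⟩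
  rw [hasFiniteIntegral_iff_enorm]
  calc _ ≤ ∫⁻ t in Ico (0:ℝ) 1, 2 * ENNReal.ofReal ((1-t)^(-b) * (1 - t + 1)⁻¹) ∂μ := by
        apply lintegral_mono_ae
        filter_upwards [ae_restrict_mem measurableSet_Ico] with t ht
        have ht1 : 0 < 1 - t := by linarith [ht.2]
        rw [← ofReal_norm, Real.norm_of_nonneg (by positivity), show (2:ℝ≥0∞) = ENNReal.ofReal 2 by norm_num,
          ← ENNReal.ofReal_mul (by norm_num)]
        apply ENNReal.ofReal_le_ofReal
        have : (2:ℝ)⁻¹ ≤ (1 - t + 1)⁻¹ := inv_anti₀ (by linarith) (by linarith [ht.1])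
        have h3 : 0 ≤ (1-t)^(-b) := by positivity
        nlinarith
    _ = 2 * ∫⁻ t in Ico (0:ℝ) 1, ENNReal.ofReal ((1-t)^(-b) * (1 - t + 1)⁻¹) ∂μ := lintegral_const_mul' _ _ (by norm_num)
    _ ≤ 2 * (D * ENNReal.ofReal (1^(-b))) := by gcongr
    _ < ⊤ := ENNReal.mul_lt_top (by norm_num) (ENNReal.mul_lt_top hD.lt_top (by simp))

lemma integrable_pow {μ : Measure ℝ} [IsFiniteMeasure μ] (n : ℕ) :
    Integrable (fun t : ℝ => t^n) (μ.restrict (Ico 0 1)) := by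
  refine Integrable.of_bound (C := 1) (by apply Measurable.aestronglyMeasurable; fun_prop) ?_
  filter_upwards [ae_restrict_mem measurableSet_Ico] with t ht
  rw [norm_pow, Real.norm_of_nonneg ht.1]
  exact pow_le_one₀ ht.1 ht.2.le

lemma mom_nonneg (μ : Measure ℝ) (n : ℕ) : 0 ≤ mom μ n := by
  unfold mom
  apply setIntegral_nonneg measurableSet_Ico
  intro t ht
  exact pow_nonneg ht.1 n

lemma Hmu_formula {μ : Measure ℝ} [IsFiniteMeasure μ] (hμ : IsCarleson μ 1) {p : ℝ} (hp : 1 < p)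
    {f : ℂ → ℂ} (hf : MemHardy p f) :
    HmuWD μ f ∧ (∃ K, ∀ n, ‖hmuCoeff μ f n‖ ≤ K) ∧
    ∀ z ∈ ball (0:ℂ) 1, Hmu μ f z = ∫ t in Ico (0:ℝ) 1, f t / (1 - t * z) ∂μ := by
  obtain ⟨B, b, hB, hb0, hb1, hA⟩ := A_bound hp hf
  have hint := (Carl.integrable_mu hμ hb0 hb1).const_mul B
  set K := ∫ t in Ico (0:ℝ) 1, B * (1-t)^(-b) ∂μ with hK
  have hmem : ∀ t ∈ Ico (0:ℝ) 1, (t:ℂ) ∈ ball (0:ℂ) 1 := by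
    intro t ht
    simp [abs_of_nonneg ht.1, ht.2]
  have hterm : ∀ n k, ‖(mom μ (n+k) : ℂ) * tc f k‖ = ‖tc f k‖ * mom μ (n+k) := by
    intro n k
    rw [norm_mul, Complex.norm_real, Real.norm_of_nonneg (mom_nonneg _ _), mul_comm]
  have hpart : ∀ n N, ∑ k ∈ Finset.range N, ‖(mom μ (n+k) : ℂ) * tc f k‖ ≤ K := by
    intro n N
    simp_rw [hterm, mom]
    simp_rw [← integral_const_mul]
    rw [← integral_finsetSum _ (fun k _ => (integrable_pow _).const_mul _)]
    apply integral_mono_ae (integrable_finsetSum _ (fun k _ => (integrable_pow _).const_mul _)) hint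
    filter_upwards [ae_restrict_mem measurableSet_Ico] with t ht
    refine le_trans (Finset.sum_le_sum fun k _ => ?_) (hA t ht N)
    have : t^(n+k) ≤ t^k := pow_le_pow_of_le_one ht.1 ht.2.le (by omega)
    gcongr
  have hsum : ∀ n : ℕ, Summable fun k : ℕ => ‖(mom μ (n + k) : ℂ) * tc f k‖ := fun n =>
    summable_of_sum_range_le (fun _ => norm_nonneg _) (hpart n)
  have hcK : ∀ n, ‖hmuCoeff μ f n‖ ≤ K := fun n =>
    (norm_tsum_le_tsum_norm (hsum n)).trans (Real.tsum_le_of_sum_range_le (fun _ => norm_nonneg _) (hpart n))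
  have hwd : HmuWD μ f := by
    refine ⟨hsum, fun z hz => ?_⟩
    have hz1 : ‖z‖ < 1 := by simpa using hz
    refine Summable.of_nonneg_of_le (fun _ => norm_nonneg _) (fun n => ?_)
      ((summable_geometric_of_lt_one (norm_nonneg z) hz1).mul_left K)
    rw [norm_mul, norm_pow]
    gcongr
    exact hcK n
  refine ⟨hwd, ⟨K, hcK⟩, ?_⟩
  have hfi : Integrable (fun t : ℝ => f t) (μ.restrict (Ico 0 1)) := by
    refine hint.mono' ?_ ?_
    · apply ContinuousOn.aestronglyMeasurable _ measurableSet_Ico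
      exact hf.1.continuousOn.comp (by fun_prop) hmem
    · filter_upwards [ae_restrict_mem measurableSet_Ico] with t ht
      rw [← (tc_hasSum hf.1 (hmem t ht)).tsum_eq]
      have hs := tc_summable hf.1 ht
      have e : ∀ n, ‖tc f n * (t:ℂ)^n‖ = ‖tc f n‖ * t^n := by
        intro n; rw [norm_mul, norm_pow, Complex.norm_real, Real.norm_of_nonneg ht.1]
      refine (norm_tsum_le_tsum_norm (by simpa only [e] using hs)).trans ?_
      simp_rw [e]
      exact Real.tsum_le_of_sum_range_le (fun _ => mul_nonneg (norm_nonneg _) (pow_nonneg ht.1 _)) (hA t ht)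
  have hcoef : ∀ n, hmuCoeff μ f n = ∫ t in Ico (0:ℝ) 1, (t:ℂ)^n * f t ∂μ := by
    intro n
    have H := hasSum_integral_of_summable_integral_norm (μ := μ.restrict (Ico 0 1))
      (F := fun (k:ℕ) (t:ℝ) => ((t^(n+k) : ℝ):ℂ) * tc f k) (fun k => (integrable_pow (n+k)).ofReal.mul_const _) ?_
    · rw [hmuCoeff]
      have e : ∀ k, ∫ t in Ico (0:ℝ) 1, ((t^(n+k) : ℝ):ℂ) * tc f k ∂μ = (mom μ (n+k) : ℂ) * tc f k := by
        intro k
        rw [integral_mul_const, integral_complex_ofReal, mom]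
      simp_rw [e] at H
      rw [H.tsum_eq]
      apply integral_congr_ae
      filter_upwards [ae_restrict_mem measurableSet_Ico] with t ht
      rw [← (tc_hasSum hf.1 (hmem t ht)).tsum_eq, ← tsum_mul_left]
      congr 1; ext k; push_cast; ring
    · refine (hsum n).congr fun k => ?_
      rw [hterm, mom, mul_comm, ← integral_mul_const]
      apply integral_congr_ae
      filter_upwards [ae_restrict_mem measurableSet_Ico] with t ht
      rw [norm_mul, Complex.norm_real, Real.norm_of_nonneg (pow_nonneg ht.1 _)]
  intro z hz
  have hz1 : ‖z‖ < 1 := by simpa using hz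
  have hFi : ∀ n : ℕ, Integrable (fun t : ℝ => (t:ℂ)^n * f t * z^n) (μ.restrict (Ico 0 1)) := by
    intro n
    apply Integrable.mul_const
    refine hfi.norm.mono' ?_ ?_
    · apply AEStronglyMeasurable.mul _ hfi.1
      apply Continuous.aestronglyMeasurable; fun_prop
    · filter_upwards [ae_restrict_mem measurableSet_Ico] with t ht
      rw [norm_mul, norm_pow, Complex.norm_real, Real.norm_of_nonneg ht.1]
      exact mul_le_of_le_one_left (norm_nonneg _) (pow_le_one₀ ht.1 ht.2.le)
  have H := hasSum_integral_of_summable_integral_norm (μ := μ.restrict (Ico 0 1))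
    (F := fun (n:ℕ) (t:ℝ) => (t:ℂ)^n * f t * z^n) hFi ?_
  · rw [Hmu]
    simp_rw [integral_mul_const] at H
    simp_rw [hcoef]
    rw [H.tsum_eq]
    apply integral_congr_ae
    filter_upwards [ae_restrict_mem measurableSet_Ico] with t ht
    have hlt : ‖(t:ℂ) * z‖ < 1 := by
      rw [norm_mul, Complex.norm_real, Real.norm_of_nonneg ht.1]
      nlinarith [ht.1, ht.2, norm_nonneg z]
    rw [div_eq_mul_inv, ← tsum_geometric_of_norm_lt_one hlt, ← tsum_mul_left]
    congr 1; ext k; rw [mul_pow]; ring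
  · refine Summable.of_nonneg_of_le (fun _ => by positivity) (fun n => ?_)
      ((summable_geometric_of_lt_one (norm_nonneg z) hz1).mul_left (∫ t in Ico (0:ℝ) 1, ‖f t‖ ∂μ))
    rw [← integral_mul_const]
    apply integral_mono_ae (hFi n).norm (hfi.norm.mul_const _)
    filter_upwards [ae_restrict_mem measurableSet_Ico] with t ht
    rw [norm_mul, norm_mul, norm_pow, norm_pow, Complex.norm_real, Real.norm_of_nonneg ht.1]
    gcongr
    exact mul_le_of_le_one_left (norm_nonneg _) (pow_le_one₀ ht.1 ht.2.le)

lemma diff_ps {c : ℕ → ℂ} {K : ℝ} (hc : ∀ n, ‖c n‖ ≤ K) :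
    DifferentiableOn ℂ (fun z => ∑' n, c n * z^n) (ball 0 1) := by
  intro z hz
  have hz1 : ‖z‖ < 1 := by simpa using hz
  obtain ⟨ρ, h1, h2⟩ := exists_between hz1
  have hρ : 0 ≤ ρ := (norm_nonneg z).trans h1.le
  have : DifferentiableOn ℂ (fun z => ∑' n, c n * z^n) (ball 0 ρ) := by
    apply Complex.differentiableOn_tsum_of_summable_norm ((summable_geometric_of_lt_one hρ h2).mul_left K)
      (fun n => by fun_prop) isOpen_ball
    intro n w hw
    have hw1 : ‖w‖ < ρ := by simpa using hw
    rw [norm_mul, norm_pow]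
    have := hc n
    have : 0 ≤ K := (norm_nonneg _).trans this
    gcongr
  exact (this.differentiableAt (isOpen_ball.mem_nhds (by simpa using h1))).differentiableWithinAt

lemma suff {μ : Measure ℝ} [IsFiniteMeasure μ] (hμ : IsCarleson μ 1) {p : ℝ} (hp : 1 < p) :
    (∀ f : ℂ → ℂ, MemHardy p f → HmuWD μ f ∧ MemHardy p (Hmu μ f)) ∧
      ∃ C > 0, ∀ f : ℂ → ℂ, MemHardy p f → hardyNorm p (Hmu μ f) ≤ C * hardyNorm p f := by
  have hpi := Real.pi_pos
  have hp0 : 0 < p := by linarith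
  obtain ⟨D1, hD1, hE⟩ := embed hμ hp
  obtain ⟨D2, hD2, hS⟩ := schur carlT (carlMu hμ) p hp
  set D : ℝ≥0∞ := 6^p * (D2 * D1) with hDdef
  have hD : D ≠ ⊤ := ENNReal.mul_ne_top (ENNReal.rpow_ne_top_of_nonneg (by linarith) (by norm_num)) (ENNReal.mul_ne_top hD2 hD1)
  set C : ℝ := D.toReal^(1/p) + 1 with hC
  have hC0 : 0 < C := by positivity
  have hdiff : ∀ f : ℂ → ℂ, MemHardy p f → DifferentiableOn ℂ (Hmu μ f) (ball 0 1) := by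
    intro f hf
    obtain ⟨h1, ⟨K, hK⟩, h3⟩ := Hmu_formula hμ hp hf
    exact diff_ps hK
  have key : ∀ f : ℂ → ℂ, MemHardy p f → ∀ r ∈ Ico (0:ℝ) 1, circMean p (Hmu μ f) r ≤ C * hardyNorm p f := by
    intro f hf r hr
    obtain ⟨h1, ⟨K, hK⟩, h3⟩ := Hmu_formula hμ hp hf
    have hN := hardyNorm_nonneg hf
    apply cm_le hp0 (hdiff f hf).continuousOn hr (by positivity)
    set g : ℝ → ℝ≥0∞ := (Ico (0:ℝ) 1).piecewise (fun t => ‖f t‖ₑ) 0 with hg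
    have hgm : Measurable g := by
      apply ContinuousOn.measurable_piecewise _ continuousOn_const measurableSet_Ico
      apply ContinuousOn.enorm
      apply hf.1.continuousOn.comp (by fun_prop)
      intro t ht
      simp [abs_of_nonneg ht.1, ht.2]
    calc ∫⁻ θ, ‖Hmu μ f (r * Complex.exp (θ * Complex.I))‖ₑ ^ p ∂Tm
        ≤ ∫⁻ θ, 6^p * (∫⁻ t in Ico (0:ℝ) 1, g t * ENNReal.ofReal ((sg θ + (1 - t))⁻¹) ∂μ)^p ∂Tm := by
          apply lintegral_mono_ae
          filter_upwards [ae_restrict_mem measurableSet_Ioo] with θ hθ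
          rw [← ENNReal.mul_rpow_of_nonneg _ _ (by linarith)]
          apply ENNReal.rpow_le_rpow _ hp0.le
          rw [h3 _ (by simp [Complex.norm_exp_ofReal_mul_I, abs_of_nonneg hr.1, hr.2]), ← lintegral_const_mul' _ _ (by norm_num)]
          refine (enorm_integral_le_lintegral_enorm _).trans ?_
          apply lintegral_mono_ae
          filter_upwards [ae_restrict_mem measurableSet_Ico] with t ht
          have hgt : g t = ‖f t‖ₑ := by simp only [hg]; exact Set.piecewise_eq_of_mem _ _ _ ht
          have htr1 : t * r ≤ t := mul_le_of_le_one_right ht.1 hr.2.le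
          have hk := ker_lb (mul_nonneg ht.1 hr.1) (by linarith [ht.2]) hθ
          have hs : 0 < sg θ + (1 - t) := by
            have : 0 < sg θ := lt_min hθ.1 (by linarith [hθ.2])
            linarith [ht.2]
          rw [hgt, div_eq_mul_inv, enorm_mul, mul_left_comm (6:ℝ≥0∞)]
          refine mul_le_mul' le_rfl ?_
          rw [← ofReal_norm, show (6:ℝ≥0∞) = ENNReal.ofReal 6 by norm_num, ← ENNReal.ofReal_mul (by norm_num)]
          apply ENNReal.ofReal_le_ofReal
          have e : (1:ℂ) - t * (r * Complex.exp (θ * Complex.I)) = 1 - ((t * r : ℝ):ℂ) * Complex.exp (θ * Complex.I) := by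
            push_cast; ring
          rw [e, norm_inv, ← div_eq_mul_inv, inv_eq_one_div, div_le_div_iff₀ (by linarith) hs]
          linarith
      _ = 6^p * ∫⁻ θ, (∫⁻ t in Ico (0:ℝ) 1, g t * ENNReal.ofReal ((sg θ + (1 - t))⁻¹) ∂μ)^p ∂Tm :=
          lintegral_const_mul' _ _ (ENNReal.rpow_ne_top_of_nonneg (by linarith) (by norm_num))
      _ ≤ 6^p * (D2 * ∫⁻ t in Ico (0:ℝ) 1, (g t)^p ∂μ) := mul_le_mul' le_rfl (hS g hgm)
      _ = 6^p * (D2 * ∫⁻ t in Ico (0:ℝ) 1, ‖f t‖ₑ^p ∂μ) := by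
          congr 2
          apply setLIntegral_congr_fun measurableSet_Ico
          intro t ht
          simp only [hg]
          rw [Set.piecewise_eq_of_mem _ _ _ ht]
      _ ≤ 6^p * (D2 * (D1 * ENNReal.ofReal ((hardyNorm p f)^p))) := by
          gcongr; exact hE f hf
      _ = D * ENNReal.ofReal ((hardyNorm p f)^p) := by rw [hDdef]; ring
      _ = ENNReal.ofReal (D.toReal * (hardyNorm p f)^p) := by
          rw [ENNReal.ofReal_mul (by positivity), ENNReal.ofReal_toReal hD]
      _ ≤ _ := by
          apply ENNReal.ofReal_le_ofReal
          rw [Real.mul_rpow hC0.le hN, ← mul_assoc]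
          apply mul_le_mul_of_nonneg_right _ (by positivity)
          have h5 : D.toReal ≤ C^p := by
            calc D.toReal = (D.toReal^(1/p))^p := by
                  rw [← Real.rpow_mul (by positivity), show 1/p*p = 1 by field_simp, Real.rpow_one]
              _ ≤ C^p := by
                  apply Real.rpow_le_rpow (by positivity) _ hp0.le
                  rw [hC]; linarith
          have : 0 ≤ C^p := by positivity
          nlinarith [Real.pi_gt_three]
  refine ⟨fun f hf => ⟨(Hmu_formula hμ hp hf).1, hdiff f hf, _, key f hf⟩, C, hC0, fun f hf => norm_le (key f hf)⟩


lemma dk_int {s : ℝ} (hs : 1 < s) : ∃ A : ℝ, 0 < A ∧ ∀ N : ℕ, 1 ≤ N → ∀ h : ℝ → ℂ,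
    (∀ θ ∈ Ioo 0 (2 * Real.pi), ‖h θ‖ * (1 / (N:ℝ) + sg θ) ≤ 13) →
    ∫⁻ θ, ‖h θ‖ₑ^s ∂Tm ≤ ENNReal.ofReal (A * (N:ℝ)^(s-1)) := by
  set a : ℝ := min (s-1) (1/2) with ha
  have ha0 : 0 < a := lt_min (by linarith) (by norm_num)
  have ha1 : a < 1 := (min_le_right _ _).trans_lt (by norm_num)
  have has : a ≤ s - 1 := min_le_left _ _
  obtain ⟨D, hD, hd⟩ := carlT.dyadic a ha0 ha1
  refine ⟨13^s * (D.toReal + 1), by positivity, fun N hN h hh => ?_⟩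
  have hN0 : (0:ℝ) < N := by exact_mod_cast hN
  set y : ℝ := 1 / (N:ℝ) with hy
  have hy0 : 0 < y := by positivity
  calc ∫⁻ θ, ‖h θ‖ₑ^s ∂Tm
      ≤ ∫⁻ θ, ENNReal.ofReal (13^s * y^(a-s+1)) * ENNReal.ofReal ((sg θ)^(-a) * (sg θ + y)⁻¹) ∂Tm := by
        apply lintegral_mono_ae
        filter_upwards [ae_restrict_mem measurableSet_Ioo] with θ hθ
        have hσ : 0 < sg θ := lt_min hθ.1 (by linarith [hθ.2])
        rw [← ofReal_norm, ENNReal.ofReal_rpow_of_nonneg (norm_nonneg _) (by linarith), ← ENNReal.ofReal_mul (by positivity)]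
        apply ENNReal.ofReal_le_ofReal
        have h1 : ‖h θ‖ ≤ 13 * (y + sg θ)⁻¹ := by
          rw [← div_eq_mul_inv, le_div_iff₀ (by positivity)]
          exact hh θ hθ
        calc ‖h θ‖^s ≤ (13 * (y + sg θ)⁻¹)^s := Real.rpow_le_rpow (norm_nonneg _) h1 (by linarith)
          _ = 13^s * ((y + sg θ)^(a-s+1) * ((y + sg θ)^(-a) * (sg θ + y)⁻¹)) := by
              rw [Real.mul_rpow (by norm_num) (by positivity)]
              congr 1
              rw [add_comm (sg θ) y, ← Real.rpow_neg_one, ← Real.rpow_mul (by positivity), ← Real.rpow_add (by positivity), ← Real.rpow_add (by positivity)]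
              congr 1; ring
          _ ≤ 13^s * (y^(a-s+1) * ((sg θ)^(-a) * (sg θ + y)⁻¹)) := by
              have e1 : (y + sg θ)^(a-s+1) ≤ y^(a-s+1) :=
                Real.rpow_le_rpow_of_nonpos hy0 (by linarith) (by linarith)
              have e2 : (y + sg θ)^(-a) ≤ (sg θ)^(-a) :=
                Real.rpow_le_rpow_of_nonpos hσ (by linarith) (by linarith)
              gcongr
          _ = _ := by ring
    _ = ENNReal.ofReal (13^s * y^(a-s+1)) * ∫⁻ θ, ENNReal.ofReal ((sg θ)^(-a) * (sg θ + y)⁻¹) ∂Tm :=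
        lintegral_const_mul' _ _ ENNReal.ofReal_ne_top
    _ ≤ ENNReal.ofReal (13^s * y^(a-s+1)) * (D * ENNReal.ofReal (y^(-a))) := by
        gcongr; exact hd y hy0
    _ = ENNReal.ofReal (13^s * y^(a-s+1) * (D.toReal * y^(-a))) := by
        rw [ENNReal.ofReal_mul (p := 13^s * y^(a-s+1)) (by positivity), ENNReal.ofReal_mul (p := D.toReal) (by positivity), ENNReal.ofReal_toReal hD]
    _ ≤ _ := by
        apply ENNReal.ofReal_le_ofReal
        have e : y^(a-s+1) * y^(-a) = (N:ℝ)^(s-1) := by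
          rw [← Real.rpow_add hy0, hy, one_div, Real.inv_rpow hN0.le, ← Real.rpow_neg hN0.le]
          congr 1; ring
        calc 13^s * y^(a-s+1) * (D.toReal * y^(-a)) = 13^s * D.toReal * (y^(a-s+1) * y^(-a)) := by ring
          _ = 13^s * D.toReal * (N:ℝ)^(s-1) := by rw [e]
          _ ≤ _ := by gcongr; linarith

/-- The test polynomial. -/
def dk (N : ℕ) (z : ℂ) : ℂ := ∑ k ∈ Finset.range N, z^k

lemma dk_ptw {N : ℕ} (hN : 1 ≤ N) {r θ : ℝ} (h0 : 0 ≤ r) (h1 : r ≤ 1) (hθ : θ ∈ Ioo 0 (2 * Real.pi)) :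
    ‖dk N (r * Complex.exp (θ * Complex.I))‖ * (1 / (N:ℝ) + sg θ) ≤ 13 := by
  have hN0 : (0:ℝ) < N := by exact_mod_cast hN
  have hk := ker_lb h0 h1 hθ
  set z : ℂ := r * Complex.exp (θ * Complex.I) with hz
  have hzn : ‖z‖ ≤ 1 := by
    rw [hz, norm_mul, Complex.norm_exp_ofReal_mul_I, Complex.norm_real, Real.norm_of_nonneg h0]; linarith
  have a1 : ‖dk N z‖ ≤ N := by
    refine (norm_sum_le _ _).trans ?_
    calc ∑ k ∈ Finset.range N, ‖z^k‖ ≤ ∑ k ∈ Finset.range N, (1:ℝ) :=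
          Finset.sum_le_sum fun k _ => by rw [norm_pow]; exact pow_le_one₀ (norm_nonneg _) hzn
      _ = N := by simp
  have a2 : ‖dk N z‖ * ‖1 - z‖ ≤ 2 := by
    rw [← norm_mul, dk, geom_sum_mul_neg]
    refine (norm_sub_le _ _).trans ?_
    have : ‖z^N‖ ≤ 1 := by rw [norm_pow]; exact pow_le_one₀ (norm_nonneg _) hzn
    rw [norm_one]; linarith
  have a3 : sg θ ≤ 6 * ‖1 - z‖ := by linarith
  have a4 : ‖dk N z‖ * (1 / (N:ℝ)) ≤ 1 := by
    rw [mul_one_div, div_le_one hN0]; exact a1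
  have := mul_le_mul_of_nonneg_left a3 (norm_nonneg (dk N z))
  rw [mul_add]; nlinarith

lemma dk_trig (N : ℕ) (θ : ℝ) : ‖trig (fun _ => 1) N θ‖ = ‖dk N ((1:ℝ) * Complex.exp (θ * Complex.I))‖ := by
  rw [← RCLike.norm_conj]
  congr 1
  simp only [trig, dk, map_sum, one_mul, Complex.ofReal_one]
  apply Finset.sum_congr rfl
  intro k _
  rw [← Complex.exp_conj, ← Complex.exp_nat_mul]
  congr 1
  simp [mul_assoc]

lemma dk_diff (N : ℕ) : DifferentiableOn ℂ (dk N) (ball 0 1) := by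
  unfold dk; fun_prop

lemma dk_tc (N k : ℕ) : tc (dk N) k = if k < N then 1 else 0 := by
  have hr : (1/2:ℝ) ∈ Ico (0:ℝ) 1 := by norm_num
  set c : ℕ → ℂ := fun k => if k < N then 1 else 0 with hc
  have A := coef_int hr.1 (tc_summable (dk_diff N) hr) (fun θ => ((tc_hasSum (dk_diff N) (by
      simp [Complex.norm_exp_ofReal_mul_I]; norm_num)).tsum_eq).symm) k
  have B := coef_int (c := c) (F := dk N) hr.1 (by
      apply summable_of_ne_finset_zero (s := Finset.range N)
      intro n hn
      simp only [Finset.mem_range] at hn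
      simp [hc, hn]) (fun θ => by
      rw [tsum_eq_sum (s := Finset.range N)]
      · apply Finset.sum_congr rfl
        intro n hn
        simp only [Finset.mem_range] at hn
        simp [hc, hn]
      · intro n hn
        simp only [Finset.mem_range] at hn
        simp [hc, hn]) k
  rw [A] at B
  have hpi : (2 * Real.pi : ℂ) ≠ 0 := by simp [Real.pi_ne_zero]
  have := mul_left_cancel₀ hpi B
  exact mul_right_cancel₀ (by simp) this

lemma dk_hmu (μ : Measure ℝ) (N n : ℕ) :
    hmuCoeff μ (dk N) n = ((∑ k ∈ Finset.range N, mom μ (n + k) : ℝ) : ℂ) := by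
  unfold hmuCoeff
  rw [tsum_eq_sum (s := Finset.range N)]
  · push_cast
    apply Finset.sum_congr rfl
    intro k hk
    simp only [Finset.mem_range] at hk
    simp [dk_tc, hk]
  · intro k hk
    simp only [Finset.mem_range] at hk
    simp [dk_tc, hk]

lemma mom_anti (μ : Measure ℝ) [IsFiniteMeasure μ] {m n : ℕ} (h : m ≤ n) : mom μ n ≤ mom μ m := by
  unfold mom
  apply setIntegral_mono_on (integrable_pow n) (integrable_pow m) measurableSet_Ico
  intro t ht
  exact pow_le_pow_of_le_one ht.1 ht.2.le h

lemma nec_mom {μ : Measure ℝ} [IsFiniteMeasure μ] {p : ℝ} (hp : 1 < p)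
    (h1 : ∀ f : ℂ → ℂ, MemHardy p f → HmuWD μ f ∧ MemHardy p (Hmu μ f))
    {C : ℝ} (hC : 0 < C) (h2 : ∀ f : ℂ → ℂ, MemHardy p f → hardyNorm p (Hmu μ f) ≤ C * hardyNorm p f) :
    ∃ K : ℝ, 0 < K ∧ ∀ N : ℕ, 1 ≤ N → mom μ (2*N) ≤ K / N := by
  have hpi := Real.pi_pos
  obtain ⟨q, hpq⟩ : ∃ q, p.HolderConjugate q := ⟨_, Real.HolderConjugate.conjExponent hp⟩
  have hp0 := hpq.pos
  have hq0 := hpq.symm.pos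
  have hpq1 : p⁻¹ + q⁻¹ = 1 := hpq.inv_add_inv_eq_one
  obtain ⟨A, hA, hAb⟩ := dk_int hp
  obtain ⟨B, hB, hBb⟩ := dk_int hpq.symm.lt
  refine ⟨(2 * Real.pi)^(1/p) * (C * A^(1/p)) * B^(1/q), by positivity, fun N hN => ?_⟩
  have hN0 : (0:ℝ) < N := by exact_mod_cast hN
  set M : ℝ := A^(1/p) * (N:ℝ)^(1/q) with hM
  have hM0 : 0 ≤ M := by positivity
  have hMp : M^p = A * (N:ℝ)^(p-1) := by
    rw [hM, Real.mul_rpow (by positivity) (by positivity), ← Real.rpow_mul hA.le, ← Real.rpow_mul hN0.le]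
    congr 2
    · rw [show 1/p*p = 1 by field_simp, Real.rpow_one]
    · have : q⁻¹ = 1 - p⁻¹ := by linarith
      rw [one_div, this]; field_simp
  have hcm : ∀ r ∈ Ico (0:ℝ) 1, circMean p (dk N) r ≤ M := by
    intro r hr
    apply cm_le hp0 (dk_diff N).continuousOn hr hM0
    refine (hAb N hN _ (fun θ hθ => dk_ptw hN hr.1 hr.2.le hθ)).trans ?_
    apply ENNReal.ofReal_le_ofReal
    rw [hMp]
    have : 0 ≤ A * (N:ℝ)^(p-1) := by positivity
    nlinarith [Real.pi_gt_three]
  have hmem : MemHardy p (dk N) := ⟨dk_diff N, M, hcm⟩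
  obtain ⟨hwd, hH⟩ := h1 _ hmem
  have hHn : hardyNorm p (Hmu μ (dk N)) ≤ C * M :=
    (h2 _ hmem).trans (mul_le_mul_of_nonneg_left (norm_le hcm) hC.le)
  set s : ℕ → ℝ := fun n => ∑ k ∈ Finset.range N, mom μ (n + k) with hs
  have hs0 : ∀ n, 0 ≤ s n := fun n => Finset.sum_nonneg fun k _ => mom_nonneg μ _
  have hcs : ∀ n, hmuCoeff μ (dk N) n = (s n : ℂ) := fun n => dk_hmu μ N n
  set E : ℝ := (2 * Real.pi)^(1/p) * (C * M) * (B^(1/q) * (N:ℝ)^(1/p)) with hE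
  have key : ∀ r ∈ Ioo (0:ℝ) 1, ∑ k ∈ Finset.range N, s k * r^k ≤ E := by
    intro r hr
    have hr' : r ∈ Ico (0:ℝ) 1 := ⟨hr.1.le, hr.2⟩
    have hsum : Summable fun n => ‖hmuCoeff μ (dk N) n‖ * r^n := by
      have := hwd.2 r (by simp [abs_of_pos hr.1, hr.2])
      simpa [norm_mul, abs_of_pos hr.1] using this
    have h := pair_le hr.1.le hsum (F := Hmu μ (dk N)) (fun θ => rfl) (cont_circ hH.1.continuousOn hr') (fun _ => 1) N hpq
    have e : ∑ k ∈ Finset.range N, (1:ℂ) * hmuCoeff μ (dk N) k * (r:ℂ)^k = ((∑ k ∈ Finset.range N, s k * r^k : ℝ) : ℂ) := by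
      push_cast
      apply Finset.sum_congr rfl
      intro k _
      rw [hcs, one_mul]
    have hnn : 0 ≤ ∑ k ∈ Finset.range N, s k * r^k :=
      Finset.sum_nonneg fun k _ => mul_nonneg (hs0 k) (pow_nonneg hr.1.le _)
    rw [e, ← ofReal_norm, Complex.norm_real, Real.norm_of_nonneg hnn, lint_cm hp0 hH.1.continuousOn hr'] at h
    have hc0 := circMean_nonneg p (Hmu μ (dk N)) r
    have b1 : ENNReal.ofReal (2 * Real.pi * circMean p (Hmu μ (dk N)) r ^ p) ≤ ENNReal.ofReal (2 * Real.pi * (C * M)^p) := by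
      apply ENNReal.ofReal_le_ofReal
      have := (cm_le_norm hH hr').trans hHn
      gcongr
    have b2 := hBb N hN (trig (fun _ => 1) N) (fun θ hθ => by
      rw [dk_trig]; exact dk_ptw hN zero_le_one le_rfl hθ)
    have h3 := h.trans (mul_le_mul' (ENNReal.rpow_le_rpow b1 (by positivity)) (ENNReal.rpow_le_rpow b2 (by positivity)))
    rw [ENNReal.ofReal_rpow_of_nonneg (by positivity) (by positivity), ENNReal.ofReal_rpow_of_nonneg (by positivity) (by positivity),
      ← ENNReal.ofReal_mul (by positivity), ENNReal.ofReal_le_ofReal_iff (by positivity), Real.mul_rpow (by positivity) (by positivity),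
      Real.mul_rpow (x := B) (by positivity) (by positivity),
      ← Real.rpow_mul hN0.le, ← Real.rpow_mul (by positivity), show p * (1/p) = 1 by field_simp, Real.rpow_one,
      show (q-1)*(1/q) = 1/p by
        have : (q-1)*(1/q) = 1 - q⁻¹ := by field_simp
        rw [this, one_div]; linarith] at h3
    exact h3
  have hlim : ∑ k ∈ Finset.range N, s k ≤ E := by
    have ev : ∀ᶠ r in nhdsWithin (1:ℝ) (Iio 1), ∑ k ∈ Finset.range N, s k * r^k ≤ E := by
      filter_upwards [Ioo_mem_nhdsLT (show (0:ℝ) < 1 by norm_num)] with r hr using key r hr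
    refine le_of_tendsto ?_ ev
    have hcont : Continuous fun r : ℝ => ∑ k ∈ Finset.range N, s k * r^k := by fun_prop
    have := (hcont.tendsto 1).mono_left (nhdsWithin_le_nhds (s := Iio 1))
    simpa using this
  have hlow : N * (N * mom μ (2*N)) ≤ ∑ k ∈ Finset.range N, s k := by
    calc N * (N * mom μ (2*N)) = ∑ n ∈ Finset.range N, ∑ k ∈ Finset.range N, mom μ (2*N) := by simp
      _ ≤ _ := by
        apply Finset.sum_le_sum
        intro n hn
        apply Finset.sum_le_sum
        intro k hk
        simp only [Finset.mem_range] at hn hk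
        exact mom_anti μ (by omega)
  have hEe : E = N * ((2 * Real.pi)^(1/p) * (C * A^(1/p)) * B^(1/q)) := by
    have : (N:ℝ)^(1/q) * (N:ℝ)^(1/p) = N := by
      rw [← Real.rpow_add hN0, one_div, one_div, add_comm, hpq1, Real.rpow_one]
    rw [hE, hM]
    calc _ = ((N:ℝ)^(1/q) * (N:ℝ)^(1/p)) * ((2 * Real.pi)^(1/p) * (C * A^(1/p)) * B^(1/q)) := by ring
      _ = _ := by rw [this]
  rw [le_div_iff₀ hN0, mul_comm]
  have h9 := hlow.trans hlim
  rw [hEe] at h9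
  exact le_of_mul_le_mul_left h9 hN0

lemma nec_carl {μ : Measure ℝ} [IsFiniteMeasure μ] {K : ℝ} (hK : 0 < K)
    (h : ∀ N : ℕ, 1 ≤ N → mom μ (2*N) ≤ K / N) : IsCarleson μ 1 := by
  refine ⟨4 * (μ univ).toReal + 16 * K, by positivity, fun t ht => ?_⟩
  rw [Real.rpow_one]
  have ht1 : 0 < 1 - t := by linarith [ht.2]
  have hU : (μ (Ico t 1)).toReal ≤ (μ univ).toReal :=
    ENNReal.toReal_mono (measure_ne_top _ _) (measure_mono (subset_univ _))
  have hU0 : 0 ≤ (μ univ).toReal := ENNReal.toReal_nonneg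
  rcases lt_or_ge t (3/4) with h34 | h34
  · have : (μ univ).toReal ≤ 4 * (μ univ).toReal * (1 - t) := by nlinarith
    have : 0 ≤ 16 * K * (1 - t) := by positivity
    linarith
  set x : ℝ := 1 / (4 * (1 - t)) with hx
  have hx1 : 1 ≤ x := by rw [hx, le_div_iff₀ (by positivity)]; linarith
  set N : ℕ := ⌊x⌋₊ with hNdef
  have hN : 1 ≤ N := Nat.le_floor (by simpa using hx1)
  have hN0 : (1:ℝ) ≤ N := by exact_mod_cast hN
  have hNx : (N:ℝ) ≤ x := Nat.floor_le (by linarith)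
  have hxN : x < N + 1 := Nat.lt_floor_add_one x
  have hx4 : x * (1 - t) = 1/4 := by rw [hx]; field_simp
  have hN1 : (N:ℝ) * (1 - t) ≤ 1/4 := by nlinarith
  have hN2 : 1/8 ≤ (N:ℝ) * (1 - t) := by nlinarith
  have hpow : ∀ s ∈ Ico t 1, 1/2 ≤ s^(2*N) := by
    intro s hs
    have hb := one_add_mul_le_pow (a := t - 1) (by linarith [ht.1]) (2*N)
    push_cast at hb
    calc (1/2:ℝ) ≤ t^(2*N) := by
          rw [show 1 + (t - 1) = t by ring] at hb; nlinarith
      _ ≤ s^(2*N) := pow_le_pow_left₀ ht.1 hs.1 _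
  have hm : 1/2 * (μ (Ico t 1)).toReal ≤ mom μ (2*N) := by
    have hsub : Ico t 1 ⊆ Ico (0:ℝ) 1 := Ico_subset_Ico_left ht.1
    have hi : IntegrableOn (fun s : ℝ => s^(2*N)) (Ico 0 1) μ := integrable_pow _
    calc 1/2 * (μ (Ico t 1)).toReal = ∫ s in Ico t 1, (1/2:ℝ) ∂μ := by
          simp [measureReal_def, mul_comm]
      _ ≤ ∫ s in Ico t 1, s^(2*N) ∂μ :=
          setIntegral_mono_on (integrableOn_const (measure_ne_top _ _)) (hi.mono_set hsub) measurableSet_Ico hpow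
      _ ≤ mom μ (2*N) := by
          apply setIntegral_mono_set hi
          · filter_upwards [ae_restrict_mem measurableSet_Ico] with s hs
            exact pow_nonneg hs.1 _
          · exact hsub.eventuallyLE
  have hKN : K / N ≤ 8 * K * (1 - t) := by
    rw [div_le_iff₀ (by linarith)]; nlinarith
  have := h N hN
  have : 0 ≤ 4 * (μ univ).toReal * (1 - t) := by positivity
  nlinarith

/-- Theorem 1.4 (ii): for `1 < p < ∞`, `H_μ` is well defined and bounded on `H^p`
iff `μ` is a Carleson measure. -/
theorem hmu_bounded_Hp_iff (p : ℝ) (hp : 1 < p) (μ : Measure ℝ) [IsFiniteMeasure μ]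
    (hsupp : μ (Ico (0:ℝ) 1)ᶜ = 0) :
    ((∀ f : ℂ → ℂ, MemHardy p f → HmuWD μ f ∧ MemHardy p (Hmu μ f)) ∧
      ∃ C > 0, ∀ f : ℂ → ℂ, MemHardy p f → hardyNorm p (Hmu μ f) ≤ C * hardyNorm p f) ↔
    IsCarleson μ 1 := by
  constructor
  · rintro ⟨h1, C, hC, h2⟩
    obtain ⟨K, hK, h⟩ := nec_mom hp h1 hC h2
    exact nec_carl hK h
  · intro h
    exact suff h hp

end PaperHankel
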